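/- Let G be a vertex-transitive, planar, 1-ended, locally finite graph. Then there exists r ∈ ℕ such that for every graph H in which every ball of radius r is isomorphic to the ball of radius r in G, there is a covering map from G onto H; moreover this cover can be chosen normal. -/

import Mathlib

open SimpleGraph

/-- A topological embedding of a graph `G` in the plane: vertices are points, edges are
arcs meeting only at common endpoints and avoiding other vertices. -/
structure PlanarEmbedding {V : Type*} (G : SimpleGraph V) where
  vpos : V → ℝ × ℝ
  vinj : Function.Injective vpos
  arc : ∀ ⦃u v : V⦄, G.Adj u v → Set (ℝ × ℝ)
  arc_isArc : ∀ ⦃u v : V⦄ (h : G.Adj u v),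
    ∃ f : Path (vpos u) (vpos v), Function.Injective f ∧ Set.range f = arc h
  arc_symm : ∀ ⦃u v : V⦄ (h : G.Adj u v), arc h.symm = arc h
  arc_inter : ∀ ⦃u v u' v' : V⦄ (h : G.Adj u v) (h' : G.Adj u' v'),
    s(u, v) ≠ s(u', v') → arc h ∩ arc h' ⊆ vpos '' (({u, v} : Set V) ∩ {u', v'})
  arc_vertex : ∀ ⦃u v : V⦄ (h : G.Adj u v) (w : V), vpos w ∈ arc h → w = u ∨ w = v

/-- The point set of the embedded graph. -/
def PlanarEmbedding.image {V : Type*} {G : SimpleGraph V} (emb : PlanarEmbedding G) :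
    Set (ℝ × ℝ) :=
  Set.range emb.vpos ∪ ⋃ (u : V) (v : V) (h : G.Adj u v), emb.arc h

/-- A face of the embedding: a connected component of the complement of the image. -/
def PlanarEmbedding.IsFace {V : Type*} {G : SimpleGraph V} (emb : PlanarEmbedding G)
    (F : Set (ℝ × ℝ)) : Prop :=
  ∃ x ∈ emb.imageᶜ, F = connectedComponentIn emb.imageᶜ x

/-- The boundary of a face: the set of edges whose arcs lie in the closure of the face. -/
def PlanarEmbedding.boundaryEdges {V : Type*} {G : SimpleGraph V} (emb : PlanarEmbedding G)
    (F : Set (ℝ × ℝ)) : Set (Sym2 V) :=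
  {e | ∃ (u v : V) (h : G.Adj u v), e = s(u, v) ∧ emb.arc h ⊆ closure F}

/-- A peripheral cycle: a cycle that is induced (chordless) and non-separating. -/
def IsPeripheral {V : Type*} (G : SimpleGraph V) {v : V} (w : G.Walk v v) : Prop :=
  w.IsCycle ∧ (∀ a ∈ w.support, ∀ b ∈ w.support, G.Adj a b → s(a, b) ∈ w.edges) ∧
    ({x | x ∉ w.support} = (∅ : Set V) ∨ (G.induce {x | x ∉ w.support}).Connected)

/-- A 3-connected graph: more than 3 vertices, and removing any at most 2 vertices leaves
it connected. -/
def ThreeConnected {V : Type*} (G : SimpleGraph V) : Prop :=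
  (3 < Nat.card V ∨ Infinite V) ∧
    ∀ s : Set V, s.Finite → s.ncard ≤ 2 → (G.induce sᶜ).Connected

/-- A locally finite graph has exactly one end. -/
def OneEnded {V : Type*} (G : SimpleGraph V) : Prop :=
  ∀ K : Finset V, ∃! C : G.ComponentCompl (K : Set V), C.supp.Infinite

/-- `c` is a covering map of graphs: it preserves adjacency and restricts to a bijection
from the neighbourhood of each vertex onto the neighbourhood of its image. -/
def IsCover {V W : Type*} (G : SimpleGraph V) (H : SimpleGraph W) (c : V → W) : Prop :=
  (∀ ⦃u v : V⦄, G.Adj u v → H.Adj (c u) (c v)) ∧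
    ∀ v : V, Set.BijOn c (G.neighborSet v) (H.neighborSet (c v))

namespace PG

theorem exists_log {X : Type*} [TopologicalSpace X] [LocallyPathConnectedSpace X]
    [SimplyConnectedSpace X] (g : X → ℂ) (hg : Continuous g) (h0 : ∀ x, g x ≠ 0) :
    ∃ f : X → ℂ, Continuous f ∧ ∀ x, Complex.exp (f x) = g x := by
  classical
  obtain ⟨x₀⟩ : Nonempty X := inferInstance
  rcases Complex.isCoveringMapOn_exp.existsUnique_continuousMap_lifts
    ⟨g, hg⟩ (Complex.exp_log (h0 x₀)) (fun x ↦ h0 x) with ⟨f, ⟨-, hf⟩, -⟩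
  exact ⟨f, f.continuous, fun x => congr_fun hf x⟩

theorem log_unique {X : Type*} [TopologicalSpace X] [PreconnectedSpace X] (f g : X → ℂ)
    (hf : Continuous f) (hg : Continuous g) (h : ∀ x, Complex.exp (f x) = Complex.exp (g x))
    (a b : X) : f a - f b = g a - g b := by
  have hc : Complex.exp (f a - g a) = 1 := by
    rw [Complex.exp_sub, h a, div_self (Complex.exp_ne_zero _)]
  have := Complex.isCoveringMap_exp.eq_of_comp_eq (g₁ := f) (g₂ := fun x => g x + (f a - g a))
    hf (by fun_prop) (by
      funext x
      simp only [Function.comp, Subtype.mk.injEq]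
      rw [Complex.exp_add, hc, mul_one, h x]) a (by ring)
  have hb := congr_fun this b
  rw [hb]; ring

/-- total change of log along a curve parametrised by the reals, from 0 to 1 -/
noncomputable def dlog (g : ℝ → ℂ) : ℂ := by
  classical
  exact if h : ∃ f : ℝ → ℂ, Continuous f ∧ ∀ x, Complex.exp (f x) = g x then
    h.choose 1 - h.choose 0 else 0

theorem dlog_eq (g f : ℝ → ℂ) (hf : Continuous f) (h : ∀ x, Complex.exp (f x) = g x) :
    dlog g = f 1 - f 0 := by
  have hex : ∃ f : ℝ → ℂ, Continuous f ∧ ∀ x, Complex.exp (f x) = g x := ⟨f, hf, h⟩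
  rw [dlog, dif_pos hex]
  exact log_unique _ _ hex.choose_spec.1 hf (fun x => by rw [hex.choose_spec.2, h]) _ _

theorem exists_curves {V : Type*} {G : SimpleGraph V} (emb : PlanarEmbedding G) :
    ∃ (z : V → ℂ) (γ : V → V → ℝ → ℂ), Function.Injective z ∧
      (∀ u v, G.Adj u v → Continuous (γ u v)) ∧
      (∀ u v, G.Adj u v → γ u v 0 = z u ∧ γ u v 1 = z v) ∧
      (∀ u v, G.Adj u v → ∀ t, γ v u t = γ u v (1 - t)) ∧
      (∀ u v, G.Adj u v → ∀ w t, γ u v t = z w → w = u ∨ w = v) ∧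
      (∀ u v w x, G.Adj u v → G.Adj w x → u ≠ w → u ≠ x → v ≠ w → v ≠ x →
        ∀ s t, γ u v s ≠ γ w x t) := by
  classical
  let _ : LinearOrder V := linearOrderOfSTO WellOrderingRel
  choose f hinj hr using emb.arc_isArc
  let e : ℝ × ℝ → ℂ := fun p => Complex.equivRealProdCLM.symm p
  have he : Continuous e := Complex.equivRealProdCLM.symm.continuous
  have hei : Function.Injective e := Complex.equivRealProdCLM.symm.injective
  let γ : V → V → ℝ → ℂ := fun u v t =>
    if h : G.Adj u v then
      if u < v then e ((f h).extend t) else e ((f h.symm).extend (1 - t)) else 0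
  have hmem : ∀ u v (h : G.Adj u v) t, ∃ p ∈ emb.arc h, γ u v t = e p := by
    intro u v h t
    by_cases hlt : u < v
    · refine ⟨(f h).extend t, ?_, by simp [γ, h, hlt]⟩
      rw [← hr h, ← (f h).extend_range]; exact ⟨t, rfl⟩
    · refine ⟨(f h.symm).extend (1 - t), ?_, by simp [γ, h, hlt]⟩
      rw [← emb.arc_symm h, ← hr h.symm, ← (f h.symm).extend_range]; exact ⟨1 - t, rfl⟩
  refine ⟨fun v => e (emb.vpos v), γ, hei.comp emb.vinj, ?_, ?_, ?_, ?_, ?_⟩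
  · intro u v h
    by_cases hlt : u < v
    · have : γ u v = fun t => e ((f h).extend t) := by funext t; simp [γ, h, hlt]
      rw [this]; exact he.comp (f h).continuous_extend
    · have : γ u v = fun t => e ((f h.symm).extend (1 - t)) := by funext t; simp [γ, h, hlt]
      rw [this]
      exact he.comp ((f h.symm).continuous_extend.comp (by fun_prop))
  · intro u v h
    by_cases hlt : u < v <;> simp [γ, h, hlt]
  · intro u v h t
    rcases lt_trichotomy u v with hlt | hlt | hlt
    · have h2 : ¬ v < u := not_lt.mpr hlt.le
      simp [γ, h, h.symm, hlt, h2]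
    · exact absurd hlt h.ne
    · have h2 : ¬ u < v := not_lt.mpr hlt.le
      simp [γ, h, h.symm, hlt, h2]
  · intro u v h w t hw
    obtain ⟨p, hp, hpe⟩ := hmem u v h t
    rw [hpe] at hw
    have := hei hw
    subst this
    exact emb.arc_vertex h w hp
  · intro u v w x h h' h1 h2 h3 h4 s t hst
    obtain ⟨p, hp, hpe⟩ := hmem u v h s
    obtain ⟨q, hq, hqe⟩ := hmem w x h' t
    rw [hpe, hqe] at hst
    have := hei hst
    subst this
    have hne : s(u, v) ≠ s(w, x) := by
      intro heq; rw [Sym2.eq_iff] at heq; tauto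
    obtain ⟨y, ⟨hy1, hy2⟩, -⟩ := emb.arc_inter h h' hne ⟨hp, hq⟩
    simp only [Set.mem_insert_iff, Set.mem_singleton_iff] at hy1 hy2
    rcases hy1 with rfl | rfl <;> rcases hy2 with rfl | rfl <;> contradiction

/-- Angle data extracted from a planar embedding. -/
structure Angle {V : Type*} (G : SimpleGraph V) where
  z : V → ℂ
  D : V → V → V → ℂ
  inj : Function.Injective z
  anti : ∀ u v w, G.Adj u v → w ≠ u → w ≠ v → D v u w = - D u v w
  expD : ∀ u v w, G.Adj u v → w ≠ u → w ≠ v →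
    Complex.exp (D u v w) = (z v - z w) / (z u - z w)
  swap : ∀ u v w x, G.Adj u v → G.Adj w x → u ≠ w → u ≠ x → v ≠ w → v ≠ x →
    D u v w - D u v x + D w x v - D w x u = 0

theorem exists_angle {V : Type*} {G : SimpleGraph V} (emb : PlanarEmbedding G) :
    Nonempty (Angle G) := by
  obtain ⟨z, γ, hz, hc, hend, hrev, hv, hdis⟩ := exists_curves emb
  have key : ∀ u v w, G.Adj u v → w ≠ u → w ≠ v → ∃ f : ℝ → ℂ, Continuous f ∧
      ∀ t, Complex.exp (f t) = γ u v t - z w := by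
    intro u v w h h1 h2
    apply exists_log
    · have := hc u v h; fun_prop
    · intro t ht
      rcases hv u v h w t (sub_eq_zero.mp ht) with h' | h'
      · exact h1 h'
      · exact h2 h'
  refine ⟨⟨z, fun u v w => dlog (fun t => γ u v t - z w), hz, ?_, ?_, ?_⟩⟩
  · intro u v w h h1 h2
    obtain ⟨f, hf, hfe⟩ := key u v w h h1 h2
    rw [dlog_eq _ f hf hfe, dlog_eq _ (fun t => f (1 - t)) (by fun_prop) (fun t => by
      rw [hfe, hrev u v h])]
    simp
  · intro u v w h h1 h2
    obtain ⟨f, hf, hfe⟩ := key u v w h h1 h2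
    rw [dlog_eq _ f hf hfe, Complex.exp_sub, hfe, hfe, (hend u v h).1, (hend u v h).2]
  · intro u v w x h h' h1 h2 h3 h4
    have hc1 := hc u v h
    have hc2 := hc w x h'
    obtain ⟨L, hL, hLe⟩ := exists_log (fun p : ℝ × ℝ => γ u v p.1 - γ w x p.2) (by fun_prop)
      (fun p hp => hdis u v w x h h' h1 h2 h3 h4 _ _ (sub_eq_zero.mp hp))
    obtain ⟨e1, e2⟩ := hend u v h
    obtain ⟨e3, e4⟩ := hend w x h'
    rw [dlog_eq _ (fun t => L (t, 0)) (by fun_prop) (fun t => by rw [hLe, e3]),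
      dlog_eq _ (fun t => L (t, 1)) (by fun_prop) (fun t => by rw [hLe, e4]),
      dlog_eq _ (fun t => L (1, t) + Real.pi * Complex.I) (by fun_prop) (fun t => by
        rw [Complex.exp_add, hLe, Complex.exp_pi_mul_I, e2]; ring),
      dlog_eq _ (fun t => L (0, t) + Real.pi * Complex.I) (by fun_prop) (fun t => by
        rw [Complex.exp_add, hLe, Complex.exp_pi_mul_I, e1]; ring)]
    ring

end PG

namespace PG

variable {V : Type*} {G : SimpleGraph V}

/-- sum of the angle increments along a walk -/
noncomputable def DW (A : Angle G) : ∀ {u v : V}, G.Walk u v → V → ℂ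
  | _, _, .nil, _ => 0
  | u, _, .cons (v := v) _ p, w => A.D u v w + DW A p w

theorem DW_append (A : Angle G) {u v x : V} (p : G.Walk u v) (q : G.Walk v x) (w : V) :
    DW A (p.append q) w = DW A p w + DW A q w := by
  induction p with
  | nil => simp [DW]
  | cons h p ih => simp [DW, ih, add_assoc]

theorem exp_DW (A : Angle G) {u v : V} (p : G.Walk u v) (w : V) (hw : w ∉ p.support) :
    Complex.exp (DW A p w) = (A.z v - A.z w) / (A.z u - A.z w) := by
  induction p with
  | nil =>
    rename_i u
    have : A.z u - A.z w ≠ 0 := by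
      intro h; apply hw; simp [A.inj (sub_eq_zero.mp h)]
    simp [DW, div_self this]
  | cons h p ih =>
    rename_i a b c
    simp only [Walk.support_cons, List.mem_cons, not_or] at hw
    have hb : w ≠ b := fun e => hw.2 (e ▸ p.start_mem_support)
    have : A.z b - A.z w ≠ 0 := by
      intro h; apply hb; exact (A.inj (sub_eq_zero.mp h)).symm
    rw [DW, Complex.exp_add, ih hw.2, A.expD _ _ _ h hw.1 hb]
    rw [div_mul_div_comm, mul_comm, mul_div_mul_right _ _ this]

theorem swap_aux (A : Angle G) {u v w x : V} (h : G.Adj u v) (q : G.Walk w x)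
    (hu : u ∉ q.support) (hv : v ∉ q.support) :
    A.D u v w - A.D u v x + DW A q v - DW A q u = 0 := by
  induction q with
  | nil => simp [DW]
  | cons h' q ih =>
    rename_i a b c
    simp only [Walk.support_cons, List.mem_cons, not_or] at hu hv
    have h1 := ih hu.2 hv.2
    have hb : u ≠ b := fun e => hu.2 (e ▸ q.start_mem_support)
    have hb' : v ≠ b := fun e => hv.2 (e ▸ q.start_mem_support)
    have h2 := A.swap u v a b h h' hu.1 hb hv.1 hb'
    simp only [DW]
    linear_combination h1 + h2

theorem swap_DW (A : Angle G) {u v w x : V} (p : G.Walk u v) (q : G.Walk w x)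
    (hd : List.Disjoint p.support q.support) :
    DW A p w - DW A p x + DW A q v - DW A q u = 0 := by
  induction p with
  | nil => simp [DW]
  | cons h p ih =>
    rename_i a b c
    simp only [Walk.support_cons, List.disjoint_cons_left] at hd
    have h1 := ih hd.2
    have h2 := swap_aux A h q hd.1 (fun hb => hd.2 p.start_mem_support hb)
    simp only [DW]
    linear_combination h1 + h2

theorem DW_const (A : Angle G) {u v a b : V} (p p' : G.Walk u v) (q : G.Walk a b)
    (h : List.Disjoint p.support q.support) (h' : List.Disjoint p'.support q.support) :
    DW A p a - DW A p' a = DW A p b - DW A p' b := by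
  linear_combination swap_DW A p q h - swap_DW A p' q h'

theorem theta (A : Angle G) {u v a b c : V}
    (L1 : G.Walk u a) (R1 : G.Walk a v) (L2 : G.Walk u b) (R2 : G.Walk b v)
    (L3 : G.Walk u c) (R3 : G.Walk c v)
    (h12 : List.Disjoint L1.support R2.support) (h13 : List.Disjoint L1.support R3.support)
    (h21 : List.Disjoint L2.support R1.support) (h23 : List.Disjoint L2.support R3.support)
    (h31 : List.Disjoint L3.support R1.support) (h32 : List.Disjoint L3.support R2.support)
    (hS : (DW A (L1.append R1) c - DW A (L2.append R2) c)
      + (DW A (L2.append R2) a - DW A (L3.append R3) a)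
      + (DW A (L3.append R3) b - DW A (L1.append R1) b) = 0) : False := by
  have s12 := swap_DW A L1 R2 h12
  have s13 := swap_DW A L1 R3 h13
  have s21 := swap_DW A L2 R1 h21
  have s23 := swap_DW A L2 R3 h23
  have s31 := swap_DW A L3 R1 h31
  have s32 := swap_DW A L3 R2 h32
  simp only [DW_append] at hS
  have hhalf : (DW A R2 a + DW A R1 c + DW A R3 b) - (DW A R3 a + DW A R1 b + DW A R2 c) = 0 := by
    linear_combination (1/2) * hS + (1/2) * (- s13 + s12 + s23 - s21 + s31 - s32)
  have e : ∀ {x y : V} (L : G.Walk u x) (R : G.Walk y v), List.Disjoint L.support R.support →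
      Complex.exp (DW A R x) = (A.z v - A.z x) / (A.z y - A.z x) ∧ A.z v - A.z x ≠ 0 ∧
      A.z y - A.z x ≠ 0 := by
    intro x y L R hd
    have hx : x ∉ R.support := fun h => hd L.end_mem_support h
    refine ⟨exp_DW A R x hx, ?_, ?_⟩
    · intro h; apply hx; rw [← A.inj (sub_eq_zero.mp h)]; exact R.end_mem_support
    · intro h; apply hx; rw [← A.inj (sub_eq_zero.mp h)]; exact R.start_mem_support
  obtain ⟨e12, n12, m12⟩ := e L1 R2 h12
  obtain ⟨e13, n13, m13⟩ := e L1 R3 h13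
  obtain ⟨e21, n21, m21⟩ := e L2 R1 h21
  obtain ⟨e23, n23, m23⟩ := e L2 R3 h23
  obtain ⟨e31, n31, m31⟩ := e L3 R1 h31
  obtain ⟨e32, n32, m32⟩ := e L3 R2 h32
  have hE := congrArg Complex.exp (sub_eq_zero.mp hhalf)
  simp only [Complex.exp_add, e12, e13, e21, e23, e31, e32] at hE
  have k1 : A.z c - A.z a = - (A.z a - A.z c) := by ring
  have k2 : A.z a - A.z b = - (A.z b - A.z a) := by ring
  have k3 : A.z b - A.z c = - (A.z c - A.z b) := by ring
  rw [k1, k2, k3] at hE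
  generalize A.z a - A.z c = x at *
  generalize A.z b - A.z a = y at *
  generalize A.z c - A.z b = w at *
  generalize A.z v - A.z a = p at *
  generalize A.z v - A.z b = q at *
  generalize A.z v - A.z c = r at *
  have hne : p / y * (r / x) * (q / w) ≠ 0 := by positivity
  have : p / y * (r / x) * (q / w) = - (p / y * (r / x) * (q / w)) := by
    calc _ = _ := hE
      _ = _ := by field_simp
  exact hne (self_eq_neg.mp this)

theorem cross (A : Angle G) {p p' x y r q : V}
    (L1 : G.Walk p x) (R1 : G.Walk x p') (L2 : G.Walk p y) (R2 : G.Walk y p')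
    (L3 : G.Walk p r) (R3 : G.Walk r p') (Q1 : G.Walk x q) (Q2 : G.Walk y q) (K : G.Walk r q)
    (h12 : List.Disjoint L1.support R2.support) (h13 : List.Disjoint L1.support R3.support)
    (h21 : List.Disjoint L2.support R1.support) (h23 : List.Disjoint L2.support R3.support)
    (h31 : List.Disjoint L3.support R1.support) (h32 : List.Disjoint L3.support R2.support)
    (k1 : List.Disjoint (L1.append R1).support K.support)
    (k2 : List.Disjoint (L2.append R2).support K.support)
    (q12 : List.Disjoint (L2.append R2).support Q1.support)
    (q13 : List.Disjoint (L3.append R3).support Q1.support)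
    (q21 : List.Disjoint (L1.append R1).support Q2.support)
    (q23 : List.Disjoint (L3.append R3).support Q2.support) : False := by
  apply theta A L1 R1 L2 R2 L3 R3 h12 h13 h21 h23 h31 h32
  linear_combination DW_const A _ _ K k1 k2 + DW_const A _ _ Q1 q12 q13 + DW_const A _ _ Q2 q23 q21

end PG

namespace PG

variable {V : Type*} {G : SimpleGraph V}

/-- `S` is connected in `G` (possibly empty). -/
def Conn (G : SimpleGraph V) (S : Set V) : Prop :=
  ∀ x ∈ S, ∀ y ∈ S, ∃ p : G.Walk x y, ∀ w ∈ p.support, w ∈ S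

/-- vertices reachable from `x` inside `S` -/
def reach (G : SimpleGraph V) (S : Set V) (x : V) : Set V :=
  {y | ∃ p : G.Walk x y, ∀ w ∈ p.support, w ∈ S}

theorem reach_subset {S : Set V} {x : V} : reach G S x ⊆ S := by
  rintro y ⟨p, hp⟩; exact hp y p.end_mem_support

theorem mem_reach_self {S : Set V} {x : V} (h : x ∈ S) : x ∈ reach G S x :=
  ⟨.nil, by simpa using h⟩

theorem start_mem_of_reach {S : Set V} {x y : V} (h : y ∈ reach G S x) : x ∈ S := by
  obtain ⟨p, hp⟩ := h; exact hp x p.start_mem_support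

theorem reach_symm {S : Set V} {x y : V} (h : y ∈ reach G S x) : x ∈ reach G S y := by
  obtain ⟨p, hp⟩ := h; exact ⟨p.reverse, by simpa using hp⟩

theorem reach_trans {S : Set V} {x y z : V} (h : y ∈ reach G S x) (h' : z ∈ reach G S y) :
    z ∈ reach G S x := by
  obtain ⟨p, hp⟩ := h; obtain ⟨q, hq⟩ := h'
  refine ⟨p.append q, fun w hw => ?_⟩
  rcases (Walk.mem_support_append_iff _ _).mp hw with h | h
  · exact hp w h
  · exact hq w h

theorem reach_adj {S : Set V} {x y z : V} (h : y ∈ reach G S x) (ha : G.Adj y z) (hz : z ∈ S) :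
    z ∈ reach G S x := by
  refine reach_trans h ⟨.cons ha .nil, ?_⟩
  have := reach_subset h
  simp [this, hz]

theorem reach_mono {S T : Set V} (h : S ⊆ T) {x y : V} (hy : y ∈ reach G S x) :
    y ∈ reach G T x := by
  obtain ⟨p, hp⟩ := hy; exact ⟨p, fun w hw => h (hp w hw)⟩

theorem mem_reach_of_mem_support {S : Set V} {x y z : V} (p : G.Walk x y)
    (hp : ∀ w ∈ p.support, w ∈ S) (hz : z ∈ p.support) : z ∈ reach G S x := by
  classical
  exact ⟨p.takeUntil z hz, fun w hw => hp w (p.support_takeUntil_subset_support hz hw)⟩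

theorem conn_of_base {S : Set V} {x : V} (h : ∀ y ∈ S, y ∈ reach G S x) : Conn G S := by
  intro a ha b hb
  exact reach_trans (reach_symm (h a ha)) (h b hb)

theorem conn_reach (S : Set V) (x : V) : Conn G (reach G S x) := by
  apply conn_of_base (x := x)
  rintro y ⟨p, hp⟩
  exact ⟨p, fun w hw => mem_reach_of_mem_support p hp hw⟩

theorem conn_support {u v : V} (p : G.Walk u v) : Conn G {x | x ∈ p.support} := by
  apply conn_of_base (x := u)
  intro y hy
  exact mem_reach_of_mem_support p (fun w hw => hw) hy

theorem Conn.reach_eq {S : Set V} (h : Conn G S) {x : V} (hx : x ∈ S) : reach G S x = S :=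
  Set.Subset.antisymm reach_subset (fun y hy => h x hx y hy)

/-- a closed subset (within `S`) of a connected set is everything -/
theorem Conn.eq_of_closed {S T : Set V} (h : Conn G S) {x : V} (hx : x ∈ S) (hxT : x ∈ T)
    (hT : ∀ a b, a ∈ T → a ∈ S → b ∈ S → G.Adj a b → b ∈ T) : S ⊆ T := by
  intro y hy
  by_contra hyT
  obtain ⟨p, hp⟩ := h x hx y hy
  obtain ⟨d, hd, h1, h2⟩ := p.exists_boundary_dart T hxT hyT
  exact h2 (hT d.fst d.snd h1 (hp _ (p.dart_fst_mem_support_of_mem_darts hd))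
    (hp _ (p.dart_snd_mem_support_of_mem_darts hd)) d.adj)

theorem mk_eq_of_walk {S : Set V} {x y : V} (p : G.Walk x y) (hp : ∀ w ∈ p.support, w ∈ Sᶜ)
    (hx : x ∉ S) (hy : y ∉ S) : G.componentComplMk hx = G.componentComplMk hy := by
  induction p with
  | nil => rfl
  | cons h p ih =>
    rename_i a b c
    have hb : b ∉ S := hp b (by simp)
    rw [componentComplMk_eq_of_adj G hx hb h]
    exact ih (fun w hw => hp w (by simp [hw])) hb hy

theorem aux {S : Set V} {x y : (Sᶜ : Set V)} (p : (G.induce Sᶜ).Walk x y) :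
    y.1 ∈ reach G Sᶜ x.1 := by
  induction p with
  | nil => exact mem_reach_self (Subtype.property _)
  | cons h p ih =>
    rename_i a b c
    exact reach_trans (reach_adj (mem_reach_self a.2) h b.2) ih

theorem supp_mk {S : Set V} {x : V} (hx : x ∉ S) :
    (G.componentComplMk hx).supp = reach G Sᶜ x := by
  ext y
  constructor
  · rintro ⟨hy, h⟩
    rw [ConnectedComponent.eq] at h
    obtain ⟨p⟩ := h
    apply reach_symm
    exact aux p
  · rintro ⟨p, hp⟩
    have hy : y ∉ S := hp y p.end_mem_support
    exact ⟨hy, (mk_eq_of_walk p hp hx hy).symm⟩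

/-- the facts about `G` used in the combinatorial part -/
structure Good (G : SimpleGraph V) : Prop where
  oe : ∀ S : Set V, S.Finite → ∀ x y, (reach G Sᶜ x).Infinite → (reach G Sᶜ y).Infinite →
    y ∈ reach G Sᶜ x
  oex : ∀ S : Set V, S.Finite → ∃ x, (reach G Sᶜ x).Infinite
  conn : Conn G Set.univ
  inf : Infinite V
  tc : ∀ X : Set V, X.Finite → X.Nonempty → ∀ s t, ∃ x ∈ X, ∃ y, y ∉ X ∧ G.Adj x y ∧ y ≠ s ∧ y ≠ t

theorem oe_of_oneEnded (hone : OneEnded G) : (∀ S : Set V, S.Finite → ∀ x y,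
    (reach G Sᶜ x).Infinite → (reach G Sᶜ y).Infinite → y ∈ reach G Sᶜ x) ∧
    (∀ S : Set V, S.Finite → ∃ x, (reach G Sᶜ x).Infinite) := by
  constructor
  · intro S hS x y hx hy
    have hone' := hone hS.toFinset
    rw [hS.coe_toFinset] at hone'
    obtain ⟨C, -, hC⟩ := hone'
    have hxS : x ∉ S := by
      obtain ⟨a, ha⟩ := hx.nonempty; exact start_mem_of_reach ha
    have hyS : y ∉ S := by
      obtain ⟨a, ha⟩ := hy.nonempty; exact start_mem_of_reach ha
    have h1 := hC (G.componentComplMk hxS) (by simpa only [supp_mk] using hx)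
    have h2 := hC (G.componentComplMk hyS) (by simpa only [supp_mk] using hy)
    rw [← supp_mk hxS, h1, ← h2, supp_mk]
    exact mem_reach_self hyS
  · intro S hS
    have hone' := hone hS.toFinset
    rw [hS.coe_toFinset] at hone'
    obtain ⟨C, hC', -⟩ := hone'
    obtain ⟨x, hxS, hx⟩ := hC'.nonempty
    refine ⟨x, ?_⟩
    rw [← supp_mk hxS, hx]; exact hC'

section nb
open Classical in
/-- outer vertex boundary -/
noncomputable def nb (G : SimpleGraph V) [G.LocallyFinite] (X : Finset V) : Finset V :=
  X.biUnion (fun x => G.neighborFinset x) \ X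

variable [G.LocallyFinite]

theorem mem_nb {X : Finset V} {y : V} : y ∈ nb G X ↔ (∃ x ∈ X, G.Adj x y) ∧ y ∉ X := by
  simp [nb]

open Classical in
theorem nb_submod (A B : Finset V) :
    (nb G (A ∩ B)).card + (nb G (A ∪ B)).card ≤ (nb G A).card + (nb G B).card := by
  rw [← Finset.card_union_add_card_inter (nb G (A ∩ B)), ← Finset.card_union_add_card_inter (nb G A)]
  apply Nat.add_le_add <;> apply Finset.card_le_card <;> intro y <;>
    simp only [Finset.mem_union, Finset.mem_inter, mem_nb] <;> grind

open Classical in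
theorem nb_image (α : G ≃g G) (A : Finset V) : nb G (A.image α) = (nb G A).image α := by
  ext y
  simp only [mem_nb, Finset.mem_image]
  constructor
  · rintro ⟨⟨x, ⟨a, ha, rfl⟩, h⟩, hy⟩
    refine ⟨α.symm y, ⟨⟨a, ha, ?_⟩, ?_⟩, by simp⟩
    · rw [← α.map_adj_iff]; simpa using h
    · intro h'; exact hy ⟨_, h', by simp⟩
  · rintro ⟨z, ⟨⟨x, hx, h⟩, hz⟩, rfl⟩
    refine ⟨⟨α x, ⟨x, hx, rfl⟩, α.map_adj_iff.mpr h⟩, ?_⟩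
    rintro ⟨a, ha, h'⟩
    exact hz (α.injective h' ▸ ha)

theorem exists_min_nb (k : ℕ) (h : ∃ X : Finset V, X.Nonempty ∧ (nb G X).card ≤ k) :
    ∃ A : Finset V, A.Nonempty ∧ (nb G A).card ≤ k ∧
      ∀ B : Finset V, B.Nonempty → (nb G B).card ≤ k → A.card ≤ B.card := by
  classical
  have hex : ∃ n, ∃ X : Finset V, X.card = n ∧ X.Nonempty ∧ (nb G X).card ≤ k := by
    obtain ⟨X, hX⟩ := h; exact ⟨_, X, rfl, hX⟩
  obtain ⟨A, h1, h2, h3⟩ := Nat.find_spec hex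
  exact ⟨A, h2, h3, fun B hB hB' => by rw [h1]; exact Nat.find_min' hex ⟨B, rfl, hB, hB'⟩⟩

theorem min_translate (htrans : ∀ u v : V, ∃ α : G ≃g G, α u = v) (k : ℕ)
    (hk : ∀ X : Finset V, X.Nonempty → k ≤ (nb G X).card)
    (A : Finset V) (hA : A.Nonempty) (hAk : (nb G A).card ≤ k)
    (hmin : ∀ B : Finset V, B.Nonempty → (nb G B).card ≤ k → A.card ≤ B.card)
    (s : V) (hs : s ∈ nb G A) :
    ∃ B : Finset V, B.Nonempty ∧ s ∈ B ∧ (nb G B).card ≤ k ∧ Disjoint A B := by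
  classical
  obtain ⟨a, ha⟩ := hA
  obtain ⟨α, hα⟩ := htrans a s
  have hsB : s ∈ A.image α := Finset.mem_image.mpr ⟨a, ha, hα⟩
  refine ⟨A.image α, ⟨s, hsB⟩, hsB, ?_, ?_⟩
  · rw [nb_image]; exact Finset.card_image_le.trans hAk
  · by_contra hd
    rw [Finset.disjoint_iff_inter_eq_empty, ← ne_eq, ← Finset.nonempty_iff_ne_empty] at hd
    have h1 := nb_submod (G := G) A (A.image α)
    have h2 : (nb G (A.image α)).card ≤ k := by
      rw [nb_image]; exact Finset.card_image_le.trans hAk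
    have h3 := hk (A ∪ A.image α) ⟨a, by simp [ha]⟩
    have h4 : (nb G (A ∩ A.image α)).card ≤ k := by omega
    have h5 := hmin _ hd h4
    have h6 : A ∩ A.image α = A := Finset.eq_of_subset_of_card_le Finset.inter_subset_left h5
    have h7 : A ⊆ A.image α := Finset.inter_eq_left.mp h6
    have h8 : A = A.image α := Finset.eq_of_subset_of_card_le h7 Finset.card_image_le
    rw [← h8] at hsB
    exact (mem_nb.mp hs).2 hsB

theorem nb_card_one (hconn : Conn G Set.univ) [Infinite V] (X : Finset V) (hX : X.Nonempty) :
    1 ≤ (nb G X).card := by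
  by_contra h
  have h0 : nb G X = ∅ := by rw [← Finset.card_eq_zero]; omega
  obtain ⟨x, hx⟩ := hX
  have := hconn.eq_of_closed (T := (X : Set V)) (Set.mem_univ x) (by simpa using hx) (by
    intro a b ha _ _ hab
    by_contra hb
    have : b ∈ nb G X := mem_nb.mpr ⟨⟨a, by simpa using ha, hab⟩, by simpa using hb⟩
    simp [h0] at this)
  exact Set.infinite_univ (X.finite_toSet.subset this)

theorem nb_card_two (htrans : ∀ u v : V, ∃ α : G ≃g G, α u = v) (hconn : Conn G Set.univ)
    [Infinite V] (X : Finset V) (hX : X.Nonempty) : 2 ≤ (nb G X).card := by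
  classical
  by_contra hcon
  have hone := nb_card_one (G := G) hconn
  obtain ⟨A, hA, hA1, hmin⟩ := exists_min_nb (G := G) 1 ⟨X, hX, by omega⟩
  have hpos := hone A hA
  obtain ⟨s, hs⟩ := Finset.card_pos.mp (by omega : 0 < (nb G A).card)
  obtain ⟨B, hB, hsB, hB1, hd⟩ := min_translate htrans 1 hone A hA hA1 hmin s hs
  obtain ⟨⟨a, haA, has⟩, hsA⟩ := mem_nb.mp hs
  have haB : a ∈ nb G B := mem_nb.mpr ⟨⟨s, hsB, has.symm⟩, Finset.disjoint_left.mp hd haA⟩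
  have h1 := hone (A ∪ B) ⟨a, by simp [haA]⟩
  obtain ⟨y, hy⟩ := Finset.card_pos.mp (by omega : 0 < (nb G (A ∪ B)).card)
  rw [mem_nb] at hy
  obtain ⟨⟨x, hx, hxy⟩, hyn⟩ := hy
  simp only [Finset.mem_union, not_or] at hx hyn
  rcases hx with hx | hx
  · have : y ∈ nb G A := mem_nb.mpr ⟨⟨x, hx, hxy⟩, hyn.1⟩
    have := Finset.card_le_one.mp hA1 y this s hs
    exact hyn.2 (this ▸ hsB)
  · have : y ∈ nb G B := mem_nb.mpr ⟨⟨x, hx, hxy⟩, hyn.2⟩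
    have := Finset.card_le_one.mp hB1 y this a haB
    exact hyn.1 (this ▸ haA)

theorem nb_singleton (v : V) : nb G {v} = G.neighborFinset v := by
  ext y; simp only [mem_nb, Finset.mem_singleton, exists_eq_left, mem_neighborFinset]
  constructor
  · rintro ⟨h, -⟩; exact h
  · intro h; exact ⟨h, h.ne'⟩

theorem finite_reach_nb {S : Set V} {x : V} (hf : (reach G S x).Finite) :
    ∀ y ∈ nb G hf.toFinset, y ∉ S := by
  intro y hy hyS
  rw [mem_nb] at hy
  obtain ⟨⟨a, ha, hay⟩, hyn⟩ := hy
  simp only [Set.Finite.mem_toFinset] at ha hyn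
  exact hyn (reach_adj ha hay hyS)

theorem degree_three (htrans : ∀ u v : V, ∃ α : G ≃g G, α u = v) (hone : OneEnded G)
    (hconn : Conn G Set.univ) [Infinite V] (o : V) : 3 ≤ (nb G {o}).card := by
  classical
  by_contra hcon
  have h2 := nb_card_two htrans hconn
  have hreg : ∀ v, (G.neighborFinset v).card = 2 := by
    intro v
    obtain ⟨α, rfl⟩ := htrans o v
    rw [← nb_singleton, show ({α o} : Finset V) = Finset.image α {o} by simp, nb_image,
      Finset.card_image_of_injective _ α.injective]
    have := h2 {o} ⟨o, by simp⟩
    omega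
  have hinf : ∀ x, x ∈ ({o}ᶜ : Set V) → (reach G {o}ᶜ x).Infinite := by
    intro x hx hf
    have h1 := finite_reach_nb hf
    have h3 : nb G hf.toFinset ⊆ {o} := by
      intro y hy; simpa using h1 y hy
    have h4 := h2 hf.toFinset ⟨x, by simpa using mem_reach_self hx⟩
    have := Finset.card_le_card h3
    simp at this; omega
  obtain ⟨a, b, hab, hN⟩ := Finset.card_eq_two.mp (hreg o)
  have hoa : G.Adj o a := by rw [← mem_neighborFinset, hN]; simp
  have hob : G.Adj o b := by rw [← mem_neighborFinset, hN]; simp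
  obtain ⟨p, hp⟩ := (oe_of_oneEnded hone).1 {o} (Set.finite_singleton o) a b
    (hinf a (by simpa using hoa.ne')) (hinf b (by simpa using hob.ne'))
  have hob' : o ∉ p.bypass.support := by
    intro h; exact hp o (p.support_bypass_subset_support h) rfl
  have hcyc : (Walk.cons hoa (p.bypass.concat hob.symm)).IsCycle := by
    rw [Walk.cons_isCycle_iff, Walk.concat_isPath_iff]
    refine ⟨⟨p.bypass_isPath, hob'⟩, ?_⟩
    simp only [Walk.edges_concat, List.concat_eq_append, List.mem_append, List.mem_singleton,
      not_or]
    refine ⟨fun h => hob' (Walk.fst_mem_support_of_mem_edges _ h), ?_⟩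
    intro h
    rw [Sym2.eq_iff] at h
    rcases h with ⟨h, -⟩ | ⟨-, h⟩
    · exact hob.ne h
    · exact hab h
  set c := Walk.cons hoa (p.bypass.concat hob.symm) with hc
  have := hconn.eq_of_closed (T := {x | x ∈ c.support}) (Set.mem_univ o) (by simp [hc]) (by
    intro x y hx _ _ hxy
    have h1 := hcyc.ncard_neighborSet_toSubgraph_eq_two hx
    have h3 : c.toSubgraph.neighborSet x ⊆ G.neighborFinset x := by
      intro w hw; simpa using c.toSubgraph.adj_sub hw
    have h4 : c.toSubgraph.neighborSet x = G.neighborFinset x := by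
      apply Set.eq_of_subset_of_ncard_le h3
      rw [h1, Set.ncard_coe_finset, hreg]
    have h5 : y ∈ c.toSubgraph.neighborSet x := by rw [h4]; simpa using hxy
    have := c.toSubgraph.edge_vert (Subgraph.Adj.symm h5)
    simpa using this)
  exact Set.infinite_univ ((List.finite_toSet c.support).subset this)

theorem nb_card_three (htrans : ∀ u v : V, ∃ α : G ≃g G, α u = v) (hone : OneEnded G)
    (hconn : Conn G Set.univ) [Infinite V] (X : Finset V) (hX : X.Nonempty) :
    3 ≤ (nb G X).card := by
  classical
  by_contra hcon
  have h2 := nb_card_two htrans hconn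
  obtain ⟨A, hA, hA1, hmin⟩ := exists_min_nb (G := G) 2 ⟨X, hX, by omega⟩
  have hpos := h2 A hA
  obtain ⟨s, hs⟩ := Finset.card_pos.mp (by omega : 0 < (nb G A).card)
  obtain ⟨B, hB, hsB, hB1, hd⟩ := min_translate htrans 2 h2 A hA hA1 hmin s hs
  obtain ⟨⟨a, haA, has⟩, hsA⟩ := mem_nb.mp hs
  have haB : a ∈ nb G B := mem_nb.mpr ⟨⟨s, hsB, has.symm⟩, Finset.disjoint_left.mp hd haA⟩
  have h1 := h2 (A ∪ B) ⟨a, by simp [haA]⟩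
  have hsub : nb G (A ∪ B) ⊆ (nb G A \ B) ∪ (nb G B \ A) := by
    intro y; simp only [Finset.mem_union, Finset.mem_sdiff, mem_nb]; grind
  have hcard := (Finset.card_le_card hsub).trans (Finset.card_union_le _ _)
  have hA2 := Finset.card_sdiff_add_card_inter (nb G A) B
  have hB2 := Finset.card_sdiff_add_card_inter (nb G B) A
  have hsin : s ∈ nb G A ∩ B := Finset.mem_inter.mpr ⟨hs, hsB⟩
  have hain : a ∈ nb G B ∩ A := Finset.mem_inter.mpr ⟨haB, haA⟩
  have p1 := Finset.card_pos.mpr ⟨s, hsin⟩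
  have p2 := Finset.card_pos.mpr ⟨a, hain⟩
  have hBA : ∀ x ∈ nb G B ∩ A, x = a := fun x hx =>
    Finset.card_le_one.mp (by omega) x hx a hain
  by_cases hne : (A.erase a).Nonempty
  · have hsub2 : nb G (A.erase a) ⊆ insert a ((nb G A).erase s) := by
      intro y hy
      rw [mem_nb] at hy
      obtain ⟨⟨x, hx, hxy⟩, hyn⟩ := hy
      rw [Finset.mem_erase] at hx
      by_cases hya : y = a
      · simp [hya]
      have hyA : y ∉ A := fun h => hyn (Finset.mem_erase.mpr ⟨hya, h⟩)
      refine Finset.mem_insert_of_mem (Finset.mem_erase.mpr ⟨?_, mem_nb.mpr ⟨⟨x, hx.2, hxy⟩, hyA⟩⟩)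
      rintro rfl
      exact hx.1 (hBA x (Finset.mem_inter.mpr ⟨mem_nb.mpr
        ⟨⟨y, hsB, hxy.symm⟩, Finset.disjoint_left.mp hd hx.2⟩, hx.2⟩))
    have hc2 := (Finset.card_le_card hsub2).trans (Finset.card_insert_le _ _)
    rw [Finset.card_erase_of_mem hs] at hc2
    have := hmin _ hne (by omega)
    have := Finset.card_erase_lt_of_mem haA
    omega
  · have : A = {a} := by
      rw [Finset.not_nonempty_iff_eq_empty, Finset.erase_eq_empty_iff] at hne
      rcases hne with h | h
      · simp [h] at haA
      · exact h
    have h3 := degree_three htrans hone hconn a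
    rw [← this] at h3
    omega

end nb

theorem good_of [G.LocallyFinite] (htrans : ∀ u v : V, ∃ α : G ≃g G, α u = v)
    (hone : OneEnded G) : Good G := by
  classical
  obtain ⟨oe, oex⟩ := oe_of_oneEnded hone
  obtain ⟨x, hx⟩ := oex ∅ Set.finite_empty
  rw [Set.compl_empty] at hx
  have inf : Infinite V := Set.infinite_univ_iff.mp (hx.mono (Set.subset_univ _))
  have hconn : Conn G Set.univ := by
    apply conn_of_base (x := x)
    intro y _
    obtain ⟨α, rfl⟩ := htrans x y
    rw [← Set.compl_empty]
    apply oe ∅ Set.finite_empty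
    · rwa [Set.compl_empty]
    · rw [Set.compl_empty]
      apply (hx.image (f := α) α.injective.injOn).mono
      rintro _ ⟨z, ⟨p, hp⟩, rfl⟩
      exact ⟨p.map α.toHom, fun _ _ => trivial⟩
  refine ⟨oe, oex, hconn, inf, ?_⟩
  intro X hX hne s t
  have h3 := nb_card_three htrans hone hconn hX.toFinset (by simpa using hne)
  have : ∃ y ∈ nb G hX.toFinset, y ∉ ({s, t} : Finset V) := by
    by_contra hcon
    push Not at hcon
    have := Finset.card_le_card (show nb G hX.toFinset ⊆ {s, t} from hcon)
    have := Finset.card_le_two (a := s) (b := t)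
    omega
  obtain ⟨y, hy, hyn⟩ := this
  rw [mem_nb] at hy
  obtain ⟨⟨a, ha, hay⟩, hyX⟩ := hy
  simp only [Finset.mem_insert, Finset.mem_singleton, not_or] at hyn
  exact ⟨a, by simpa using ha, y, by simpa using hyX, hay, hyn.1, hyn.2⟩

theorem Good.conn_pair (hG : Good G) (s t : V) : Conn G ({s, t}ᶜ : Set V) := by
  have hinf : ∀ x ∈ ({s, t}ᶜ : Set V), (reach G {s, t}ᶜ x).Infinite := by
    intro x hx hf
    obtain ⟨a, ha, b, hb, hab, h1, h2⟩ := hG.tc _ hf ⟨x, mem_reach_self hx⟩ s t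
    exact hb (reach_adj ha hab (by simp [h1, h2]))
  intro x hx y hy
  exact hG.oe _ (by simp) x y (hinf x hx) (hinf y hy)

theorem Good.conn_single (hG : Good G) (s : V) : Conn G ({s}ᶜ : Set V) := by
  have := hG.conn_pair s s
  simpa using this

end PG

namespace PG

variable {V : Type*} {G : SimpleGraph V}

section walks

theorem closed_path_nil {u : V} {p : G.Walk u u} (h : p.IsPath) : p = .nil := by
  cases p with
  | nil => rfl
  | cons a q =>
    rw [Walk.cons_isPath_iff] at h
    exact absurd q.end_mem_support h.2

theorem path_append_inter {u v w : V} {p : G.Walk u v} {q : G.Walk v w} (h : (p.append q).IsPath)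
    {y : V} (hp : y ∈ p.support) (hq : y ∈ q.support) : y = v := by
  have hn := h.support_nodup
  rw [Walk.support_append] at hn
  by_contra hne
  have : y ∈ q.support.tail := by
    rw [← Walk.cons_tail_support] at hq
    exact (List.mem_cons.mp hq).resolve_left hne
  exact List.disjoint_of_nodup_append hn hp this

theorem path_edge {v u : V} (p : G.Walk v u) (hp : p.IsPath) (he : s(v, u) ∈ p.edges) :
    ∃ h : G.Adj v u, p = .cons h .nil := by
  cases p with
  | nil => simp at he
  | cons h q =>
    rename_i w
    rw [Walk.cons_isPath_iff] at hp
    rw [Walk.edges_cons, List.mem_cons] at he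
    rcases he with he | he
    · have : u = w := by
        rw [Sym2.eq_iff] at he
        rcases he with ⟨-, h⟩ | ⟨h1, h2⟩
        · exact h
        · rw [h2, h1]
      subst this
      have := closed_path_nil hp.1
      subst this
      exact ⟨h, rfl⟩
    · exact absurd (q.fst_mem_support_of_mem_edges he) hp.2

theorem first_hit {u v : V} (p : G.Walk u v) (S : Set V) (h : ∃ x ∈ p.support, x ∈ S) :
    ∃ t ∈ S, ∃ (p1 : G.Walk u t) (p2 : G.Walk t v), p = p1.append p2 ∧
      ∀ x ∈ p1.support, x ∈ S → x = t := by
  induction p with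
  | nil =>
    rename_i u
    obtain ⟨x, hx, hxS⟩ := h
    rw [Walk.support_nil, List.mem_singleton] at hx
    subst hx
    exact ⟨x, hxS, .nil, .nil, rfl, by simp⟩
  | cons h' p ih =>
    rename_i a b c
    by_cases ha : a ∈ S
    · exact ⟨a, ha, .nil, .cons h' p, rfl, by simp⟩
    · obtain ⟨t, ht, p1, p2, rfl, hp⟩ := ih (by
        obtain ⟨x, hx, hxS⟩ := h
        rw [Walk.support_cons, List.mem_cons] at hx
        rcases hx with rfl | hx
        · exact absurd hxS ha
        · exact ⟨x, hx, hxS⟩)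
      refine ⟨t, ht, .cons h' p1, p2, rfl, ?_⟩
      intro x hx hxS
      rw [Walk.support_cons, List.mem_cons] at hx
      rcases hx with rfl | hx
      · exact absurd hxS ha
      · exact hp x hx hxS

theorem last_hit {u v : V} (p : G.Walk u v) (S : Set V) (h : ∃ x ∈ p.support, x ∈ S) :
    ∃ t ∈ S, ∃ (p1 : G.Walk u t) (p2 : G.Walk t v), p = p1.append p2 ∧
      ∀ x ∈ p2.support, x ∈ S → x = t := by
  obtain ⟨t, ht, p1, p2, he, hp⟩ := first_hit p.reverse S (by simpa using h)
  refine ⟨t, ht, p2.reverse, p1.reverse, ?_, by simpa using hp⟩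
  rw [← Walk.reverse_append, ← he, Walk.reverse_reverse]

theorem conn_path_tail {t z : V} (Q : G.Walk t z) (hQ : Q.IsPath) :
    Conn G {x | x ∈ Q.support ∧ x ≠ t} := by
  cases Q with
  | nil =>
    intro x hx
    simp at hx
  | cons h q =>
    rw [Walk.cons_isPath_iff] at hQ
    convert conn_support q using 1
    ext x
    simp only [Walk.support_cons, List.mem_cons, Set.mem_ofPred_eq]
    constructor
    · rintro ⟨h | h, h2⟩
      · exact absurd h h2
      · exact h
    · intro hx
      exact ⟨Or.inr hx, fun e => hQ.2 (e ▸ hx)⟩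

theorem conn_path_init {t z : V} (Q : G.Walk t z) (hQ : Q.IsPath) :
    Conn G {x | x ∈ Q.support ∧ x ≠ z} := by
  simpa using conn_path_tail Q.reverse hQ.reverse

theorem conn_path_interior {t z : V} (Q : G.Walk t z) (hQ : Q.IsPath) :
    Conn G {x | x ∈ Q.support ∧ x ≠ t ∧ x ≠ z} := by
  cases Q with
  | nil =>
    intro x hx
    simp at hx
  | cons h q =>
    rw [Walk.cons_isPath_iff] at hQ
    convert conn_path_init q hQ.1 using 1
    ext x
    simp only [Walk.support_cons, List.mem_cons, Set.mem_ofPred_eq]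
    constructor
    · rintro ⟨h | h, h2, h3⟩
      · exact absurd h h2
      · exact ⟨h, h3⟩
    · rintro ⟨hx, hx2⟩
      exact ⟨Or.inr hx, fun e => hQ.2 (e ▸ hx), hx2⟩

end walks

section hol
variable {Γ : Type*} [Group Γ]

/-- holonomy -/
def hol (h : V → V → Γ) : ∀ {u v : V}, G.Walk u v → Γ
  | _, _, .nil => 1
  | u, _, .cons (v := v) _ p => h u v * hol h p

variable (h : V → V → Γ)

@[simp] theorem hol_nil {u : V} : hol h (Walk.nil : G.Walk u u) = 1 := rfl

@[simp] theorem hol_cons {u v w : V} (a : G.Adj u v) (p : G.Walk v w) :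
    hol h (Walk.cons a p) = h u v * hol h p := rfl

theorem hol_append {u v w : V} (p : G.Walk u v) (q : G.Walk v w) :
    hol h (p.append q) = hol h p * hol h q := by
  induction p with
  | nil => simp
  | cons a p ih => simp [ih, mul_assoc]

theorem hol_reverse (hinv : ∀ u v, G.Adj u v → h v u = (h u v)⁻¹) {u v : V} (p : G.Walk u v) :
    hol h p.reverse = (hol h p)⁻¹ := by
  induction p with
  | nil => simp
  | cons a p ih =>
    rw [Walk.reverse_cons, hol_append, ih]
    simp [hinv _ _ a]

/-- all closed walks inside `U` have trivial holonomy -/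
def TrivIn (G : SimpleGraph V) (h : V → V → Γ) (U : Set V) : Prop :=
  ∀ (v : V) (p : G.Walk v v), (∀ x ∈ p.support, x ∈ U) → hol h p = 1

theorem triv_of_cycles (hinv : ∀ u v, G.Adj u v → h v u = (h u v)⁻¹) (U : Set V)
    (hc : ∀ (v : V) (c : G.Walk v v), c.IsCycle → (∀ x ∈ c.support, x ∈ U) → hol h c = 1) :
    TrivIn G h U := by
  classical
  have key : ∀ {u v : V} (p : G.Walk u v), (∀ x ∈ p.support, x ∈ U) →
      hol h p.bypass = hol h p := by
    intro u v p hp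
    induction p with
    | nil => rfl
    | cons a p ih =>
      rename_i x y z
      have hp' : ∀ w ∈ p.support, w ∈ U := fun w hw => hp w (by simp [hw])
      have ih' := ih hp'
      rw [Walk.bypass]
      split_ifs with hx
      · have hspec := Walk.take_spec p.bypass hx
        set A := p.bypass.takeUntil x hx with hA
        set B := p.bypass.dropUntil x hx with hB
        have hAp : A.IsPath := (p.bypass_isPath).takeUntil hx
        have h1 : h x y * hol h A = 1 := by
          by_cases he : s(x, y) ∈ A.edges
          · obtain ⟨a', hA'⟩ := path_edge A hAp (by rwa [Sym2.eq_swap])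
            rw [hA']; simp [hinv _ _ a]
          · have := hc x (.cons a A) ((Walk.cons_isCycle_iff _ _).mpr ⟨hAp, he⟩) (by
              intro w hw
              rw [Walk.support_cons, List.mem_cons] at hw
              rcases hw with rfl | hw
              · exact hp _ (by simp)
              · exact hp' w (p.support_bypass_subset_support
                  (Walk.support_takeUntil_subset_support _ hx hw)))
            simpa using this
        rw [hol_cons, ← ih', ← hspec, hol_append, ← mul_assoc, h1, one_mul]
      · simp [ih']
  intro v p hp
  rw [← key p hp, closed_path_nil p.bypass_isPath]
  rfl

theorem conn_compl_diff {U : Set V} (hU : Conn G Uᶜ) {s y : V} (hy : y ∉ U)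
    (hsy : G.Adj s y) : Conn G (U \ {s})ᶜ := by
  have hsub : Uᶜ ⊆ (U \ {s})ᶜ := Set.compl_subset_compl.mpr Set.sdiff_subset
  apply conn_of_base (x := y)
  intro x hx
  by_cases hxs : x = s
  · subst hxs
    exact reach_adj (mem_reach_self (hsub hy)) hsy.symm hx
  · have : x ∈ Uᶜ := fun hxU => hx ⟨hxU, hxs⟩
    exact reach_mono hsub (hU y hy x this)

theorem lemmaA (hinv : ∀ u v, G.Adj u v → h v u = (h u v)⁻¹) {U : Set V} {s t p q : V}
    (hs : TrivIn G h (U \ {s})) (ht : TrivIn G h (U \ {t})) (hc : Conn G (U \ {s, t}))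
    (hp : p ∈ U \ {s, t}) (hq : q ∈ U \ {s, t})
    (a : G.Walk s p) (b : G.Walk p t) (d : G.Walk t q) (e : G.Walk q s)
    (ha : ∀ x ∈ a.support, x ∈ U \ {t}) (hb : ∀ x ∈ b.support, x ∈ U \ {s})
    (hd : ∀ x ∈ d.support, x ∈ U \ {s}) (he : ∀ x ∈ e.support, x ∈ U \ {t}) :
    hol h a * hol h b * hol h d * hol h e = 1 := by
  obtain ⟨Y, hY⟩ := hc p hp q hq
  have h1 : hol h (a.append (Y.append e)) = 1 := by
    apply ht
    intro x hx
    simp only [Walk.mem_support_append_iff] at hx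
    rcases hx with hx | hx | hx
    · exact ha x hx
    · have := hY x hx; exact ⟨this.1, fun h => this.2 (by simp at h; simp [h])⟩
    · exact he x hx
  have h2 : hol h (Y.reverse.append (b.append d)) = 1 := by
    apply hs
    intro x hx
    simp only [Walk.mem_support_append_iff, Walk.support_reverse, List.mem_reverse] at hx
    rcases hx with hx | hx | hx
    · have := hY x hx; exact ⟨this.1, fun h => this.2 (by simp at h; simp [h])⟩
    · exact hb x hx
    · exact hd x hx
  simp only [hol_append, hol_reverse h hinv] at h1 h2
  have h3 : hol h b * hol h d = hol h Y := by
    rwa [inv_mul_eq_one, eq_comm] at h2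
  calc _ = hol h a * (hol h b * hol h d) * hol h e := by group
    _ = 1 := by rw [h3, mul_assoc]; exact h1

theorem lemmaCL (hG : Good G) {U : Set V} (hU : U.Finite) {s t : V} {T : Set V} (hT : Conn G T)
    (hTU : T ⊆ U \ {s, t})
    (hNB : ∀ x ∈ U, (∃ y, y ∉ U ∧ G.Adj x y) → x ≠ s → x ≠ t → x ∈ T) :
    Conn G (U \ {s, t}) := by
  have key : ∀ x ∈ U \ {s, t}, ∃ a ∈ T, a ∈ reach G (U \ {s, t}) x := by
    intro x hx
    have hf : (reach G (U \ {s, t}) x).Finite := hU.subset (reach_subset.trans Set.sdiff_subset)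
    obtain ⟨a, ha, b, hb, hab, h1, h2⟩ := hG.tc _ hf ⟨x, mem_reach_self hx⟩ s t
    have haU := reach_subset ha
    have hbU : b ∉ U := fun hbU => hb (reach_adj ha hab ⟨hbU, by simp [h1, h2]⟩)
    have h3 := haU.2
    simp only [Set.mem_insert_iff, Set.mem_singleton_iff, not_or] at h3
    exact ⟨a, hNB a haU.1 ⟨b, hbU, hab⟩ h3.1 h3.2, ha⟩
  intro x hx y hy
  obtain ⟨a, ha, hxa⟩ := key x hx
  obtain ⟨b, hb, hyb⟩ := key y hy
  exact reach_trans hxa (reach_trans (reach_mono hTU (hT a ha b hb)) (reach_symm hyb))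

theorem hol_rotate [DecidableEq V] {v w : V} (c : G.Walk v v) (hw : w ∈ c.support)
    (h1 : hol h (c.rotate w hw) = 1) : hol h c = 1 := by
  have hs := c.take_spec hw
  rw [Walk.rotate, hol_append] at h1
  rw [← hs, hol_append]
  exact mul_eq_one_comm.mp h1

theorem triv_step (hG : Good G) (hinv : ∀ u v, G.Adj u v → h v u = (h u v)⁻¹)
    (HP : ∀ (v : V) (c : G.Walk v v), c.IsCycle →
      (∀ a ∈ c.support, ∀ b ∈ c.support, G.Adj a b → s(a, b) ∈ c.edges) →
      Conn G {x | x ∈ c.support}ᶜ → hol h c = 1)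
    (U : Set V) (hU : U.Finite) (hUc : Conn G Uᶜ)
    (IH : ∀ s ∈ U, (∃ y, y ∉ U ∧ G.Adj s y) → TrivIn G h (U \ {s})) : TrivIn G h U := by
  classical
  apply triv_of_cycles h hinv
  intro v c hc hcU
  set NB : Set V := {s | s ∈ U ∧ ∃ y, y ∉ U ∧ G.Adj s y} with hNB
  by_cases hall : ∃ s ∈ NB, s ∉ c.support
  · obtain ⟨s, hs, hsc⟩ := hall
    exact IH s hs.1 hs.2 v c (fun x hx => ⟨hcU x hx, fun e => hsc (by simp at e; exact e ▸ hx)⟩)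
  push Not at hall
  by_cases hw : ∃ w ∈ c.support, w ∉ NB
  · obtain ⟨w, hwc, hwN⟩ := hw
    apply hol_rotate h c hwc
    have hc' : (c.rotate w hwc).IsCycle := hc.rotate hwc
    have hsup : ∀ x, x ∈ (c.rotate w hwc).support ↔ x ∈ c.support := fun x => by
      exact Walk.mem_support_rotate_iff c w hwc
    generalize c.rotate w hwc = c' at hc' hsup
    have third : ∀ s t, ∃ x ∈ NB, x ≠ s ∧ x ≠ t ∧ x ∈ c'.support := by
      intro s t
      have hfin : (U \ {s, t}).Finite := hU.subset Set.sdiff_subset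
      by_cases hne : (U \ {s, t}).Nonempty
      · obtain ⟨a, ha, b, hb, hab, h1, h2⟩ := hG.tc _ hfin hne s t
        have h3 := ha.2
        simp only [Set.mem_insert_iff, Set.mem_singleton_iff, not_or] at h3
        have haN : a ∈ NB := ⟨ha.1, b, fun hbU => hb ⟨hbU, by simp [h1, h2]⟩, hab⟩
        exact ⟨a, haN, h3.1, h3.2, (hsup a).mpr (hall a haN)⟩
      · exfalso
        have hsubset : U ⊆ {s, t} := by
          intro x hx; by_contra hx2; exact hne ⟨x, hx, hx2⟩
        have h3 := hc.three_le_length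
        have : c.support.tail.toFinset ⊆ {s, t} := by
          intro x hx
          have := hsubset (hcU x (List.mem_of_mem_tail (List.mem_toFinset.mp hx)))
          simpa using this
        have h4 := Finset.card_le_card this
        rw [List.toFinset_card_of_nodup hc.support_nodup] at h4
        have h5 := Finset.card_le_two (a := s) (b := t)
        simp at h4; omega
    obtain ⟨x0, hx0, -, -, hx0c⟩ := third w w
    obtain ⟨t, ht, P2, M, rfl, hP2⟩ := first_hit c' NB ⟨x0, hx0c, hx0⟩
    obtain ⟨s, hs, Q, P1, rfl, hP1⟩ := last_hit M NB ⟨t, M.start_mem_support, ht⟩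
    have hP2nil : ¬ P2.Nil := by
      intro hn; have := hn.eq; subst this; exact hwN ht
    have hM : (Q.append P1).IsPath := hc'.isPath_of_append_right hP2nil
    have hQ : Q.IsPath := hM.of_append_left
    obtain ⟨x, hxN, hxs, hxt, hxc⟩ := third s t
    have hxQ : x ∈ Q.support := by
      simp only [Walk.mem_support_append_iff] at hxc
      rcases hxc with h | h | h
      · exact absurd (hP2 x h hxN) hxt
      · exact h
      · exact absurd (hP1 x h hxN) hxs
    have hst : s ≠ t := by
      rintro rfl
      have := closed_path_nil hQ
      subst this
      simp at hxQ; exact hxt hxQ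
    have inU : ∀ y, y ∈ Q.support ∨ y ∈ P1.support ∨ y ∈ P2.support → y ∈ U := by
      intro y hy
      apply hcU y
      rw [← hsup y]
      simp only [Walk.mem_support_append_iff]
      tauto
    have hconn : Conn G (U \ {s, t}) := by
      apply lemmaCL hG hU (conn_path_interior Q hQ)
      · rintro y ⟨h1, h2, h3⟩
        exact ⟨inU y (Or.inl h1), by simp [h2, h3]⟩
      · intro y hyU hyN hys hyt
        refine ⟨?_, hyt, hys⟩
        have hyNB : y ∈ NB := ⟨hyU, hyN⟩
        have hyc := (hsup y).mpr (hall y hyNB)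
        simp only [Walk.mem_support_append_iff] at hyc
        rcases hyc with h | h | h
        · exact absurd (hP2 y h hyNB) hyt
        · exact h
        · exact absurd (hP1 y h hyNB) hys
    have hspec := Q.take_spec hxQ
    set Qa := Q.takeUntil x hxQ
    set Qb := Q.dropUntil x hxQ
    have hQ' : (Qa.append Qb).IsPath := hspec ▸ hQ
    have hws : w ≠ s := by rintro rfl; exact hwN hs
    have hwt : w ≠ t := by rintro rfl; exact hwN ht
    have hA := lemmaA h hinv (IH s hs.1 hs.2) (IH t ht.1 ht.2) hconn
      (p := w) (q := x) ⟨inU w (Or.inr (Or.inl P1.end_mem_support)), by simp [hws, hwt]⟩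
      ⟨hxN.1, by simp [hxs, hxt]⟩ P1 P2 Qa Qb
      (fun y hy => ⟨inU y (by tauto), by
        intro e; rw [Set.mem_singleton_iff] at e; subst e; exact hst (hP1 y hy ht).symm⟩)
      (fun y hy => ⟨inU y (by tauto), by
        intro e; rw [Set.mem_singleton_iff] at e; subst e; exact hst (hP2 y hy hs)⟩)
      (fun y hy => ⟨inU y (Or.inl (Q.support_takeUntil_subset_support hxQ hy)), by
        intro e; rw [Set.mem_singleton_iff] at e; subst e
        exact hxs (path_append_inter hQ' hy Qb.end_mem_support).symm⟩)
      (fun y hy => ⟨inU y (Or.inl (Q.support_dropUntil_subset_support hxQ hy)), by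
        intro e; rw [Set.mem_singleton_iff] at e; subst e
        exact hxt (path_append_inter hQ' Qa.start_mem_support hy).symm⟩)
    rw [← hspec]
    simp only [hol_append]
    rw [← mul_eq_one_comm.mp (by simpa only [mul_assoc] using hA :
      hol h P1 * (hol h P2 * (hol h Qa * hol h Qb)) = 1)]
    group
  · push Not at hw
    by_cases hchord : ∃ s ∈ c.support, ∃ b ∈ U, G.Adj s b ∧ s(s, b) ∉ c.edges
    · obtain ⟨s, hsc, b, hbU, hsb, hbe⟩ := hchord
      apply hol_rotate h c hsc
      have hc' : (c.rotate s hsc).IsCycle := hc.rotate hsc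
      have hsup : ∀ x, x ∈ (c.rotate s hsc).support ↔ x ∈ c.support := fun x => by
        exact Walk.mem_support_rotate_iff c s hsc
      have hed : s(s, b) ∉ (c.rotate s hsc).edges := by
        intro hb; apply hbe; exact ((c.rotate_edges s hsc).perm.mem_iff).mp hb
      generalize c.rotate s hsc = c' at hc' hsup hed
      cases c' with
      | nil => simp
      | cons hst p =>
        rename_i t
        rw [Walk.cons_isCycle_iff] at hc'
        obtain ⟨hp, hste⟩ := hc'
        obtain ⟨z, Q, hzs, rfl⟩ : ∃ (z : V) (Q : G.Walk t z) (hzs : G.Adj z s), p = Q.concat hzs := by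
          cases p with
          | nil => exact absurd rfl hst.ne
          | cons a q => exact Walk.exists_cons_eq_concat a q
        rw [Walk.concat_isPath_iff] at hp
        obtain ⟨hQ, hsQ⟩ := hp
        have hzt : z ≠ t := by
          rintro rfl
          exact hste (by simp [Walk.edges_concat, Sym2.eq_swap])
        have hbt : b ≠ t := by
          rintro rfl
          exact hed (by simp)
        have hbz : b ≠ z := by
          rintro rfl
          exact hed (by simp [Walk.edges_concat, Sym2.eq_swap])
        have hsup' : ∀ x, x ∈ c.support ↔ (x = s ∨ x ∈ Q.support) := by
          intro x
          rw [← hsup x]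
          simp only [Walk.support_cons, Walk.support_concat, List.mem_cons,
            List.concat_eq_append, List.mem_append, List.mem_singleton]
          simp only [List.not_mem_nil, or_false]
          tauto
        have QU : ∀ y ∈ Q.support, y ∈ U := fun y hy => hcU y ((hsup' y).mpr (Or.inr hy))
        have hsU := hcU s hsc
        have NBs : ∀ y, y ∈ c.support → TrivIn G h (U \ {y}) := fun y hy =>
          IH y (hw y hy).1 (hw y hy).2
        have hcz : Conn G (U \ {s, z}) := by
          apply lemmaCL hG hU (conn_path_init Q hQ)
          · rintro y ⟨h1, h2⟩
            refine ⟨QU y h1, ?_⟩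
            simp only [Set.mem_insert_iff, Set.mem_singleton_iff, not_or]
            exact ⟨fun e => hsQ (e ▸ h1), h2⟩
          · intro y hyU hyN hys hyz
            exact ⟨((hsup' y).mp (hall y ⟨hyU, hyN⟩)).resolve_left hys, hyz⟩
        have hct : Conn G (U \ {s, t}) := by
          apply lemmaCL hG hU (conn_path_tail Q hQ)
          · rintro y ⟨h1, h2⟩
            refine ⟨QU y h1, ?_⟩
            simp only [Set.mem_insert_iff, Set.mem_singleton_iff, not_or]
            exact ⟨fun e => hsQ (e ▸ h1), h2⟩
          · intro y hyU hyN hys hyz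
            exact ⟨((hsup' y).mp (hall y ⟨hyU, hyN⟩)).resolve_left hys, hyz⟩
        have hzc : z ∈ c.support := (hsup' z).mpr (Or.inr Q.end_mem_support)
        have htc : t ∈ c.support := (hsup' t).mpr (Or.inr Q.start_mem_support)
        obtain ⟨Y, hY⟩ := hcz b ⟨hbU, by simp [hsb.ne', hbz]⟩ t
          ⟨hcU t htc, by simp [hst.ne', hzt.symm]⟩
        have hY' : ∀ x ∈ Y.support, x ∈ U ∧ x ≠ s ∧ x ≠ z := by
          intro x hx; have := hY x hx
          simpa [not_or] using this
        have h1 : hol h (Walk.cons hsb (Y.concat hst.symm)) = 1 := by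
          apply NBs z hzc
          intro x hx
          simp only [Walk.support_cons, Walk.support_concat, List.mem_cons,
            List.concat_eq_append, List.mem_append, List.mem_singleton,
            List.not_mem_nil, or_false] at hx
          rcases hx with rfl | hx | rfl
          · exact ⟨hsU, by simpa using hzs.ne'⟩
          · exact ⟨(hY' x hx).1, (hY' x hx).2.2⟩
          · exact ⟨hsU, by simpa using hzs.ne'⟩
        have hA := lemmaA h hinv (NBs s hsc) (NBs t htc) hct (p := b) (q := z)
          ⟨hbU, by simp [hsb.ne', hbt]⟩ ⟨hcU z hzc, by simp [hzs.ne, hzt]⟩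
          (.cons hsb .nil) Y Q (.cons hzs .nil)
          (by
            intro x hx
            simp only [Walk.support_cons, Walk.support_nil, List.mem_cons, List.not_mem_nil,
              or_false] at hx
            rcases hx with rfl | rfl
            · exact ⟨hsU, by simpa using hst.ne⟩
            · exact ⟨hbU, by simpa using hbt⟩)
          (fun x hx => ⟨(hY' x hx).1, (hY' x hx).2.1⟩)
          (fun x hx => ⟨QU x hx, fun e => by
            rw [Set.mem_singleton_iff] at e; exact hsQ (e ▸ hx)⟩)
          (by
            intro x hx
            simp only [Walk.support_cons, Walk.support_nil, List.mem_cons, List.not_mem_nil,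
              or_false] at hx
            rcases hx with rfl | rfl
            · exact ⟨hcU _ hzc, by simpa using hzt⟩
            · exact ⟨hsU, by simpa using hst.ne⟩)
        rw [hol_cons, Walk.concat_eq_append, hol_append, hol_cons, hol_nil, mul_one] at h1
        rw [hol_cons, Walk.concat_eq_append, hol_append, hol_cons, hol_nil, mul_one]
        simp only [hol_cons, hol_nil, mul_one] at hA
        rw [hinv s t hst, ← mul_assoc, mul_inv_eq_one] at h1
        rw [← h1, ← mul_assoc, ← hA]
    · push Not at hchord
      have hUeq : U = {x | x ∈ c.support} := by
        apply Set.Subset.antisymm _ hcU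
        by_contra hne
        obtain ⟨x0, hx0, hx0c⟩ := Set.not_subset.mp hne
        obtain ⟨x, hx, y, hy, hxy, -, -⟩ := hG.tc (U \ {x | x ∈ c.support})
          (hU.subset Set.sdiff_subset) ⟨x0, hx0, hx0c⟩ x0 x0
        by_cases hyc : y ∈ c.support
        · exact hx.2 (Walk.snd_mem_support_of_mem_edges _ (hchord y hyc x hx.1 hxy.symm))
        · have hyU : y ∉ U := fun hyU => hy ⟨hyU, hyc⟩
          exact hx.2 (hall x ⟨hx.1, y, hyU, hxy⟩)
      apply HP v c hc
      · intro a ha b hb hab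
        exact hchord a ha b (hcU b hb) hab
      · rw [← hUeq]; exact hUc

theorem triv_all (hG : Good G) (hinv : ∀ u v, G.Adj u v → h v u = (h u v)⁻¹)
    (HP : ∀ (v : V) (c : G.Walk v v), c.IsCycle →
      (∀ a ∈ c.support, ∀ b ∈ c.support, G.Adj a b → s(a, b) ∈ c.edges) →
      Conn G {x | x ∈ c.support}ᶜ → hol h c = 1) :
    ∀ (n : ℕ) (U : Set V), U.Finite → U.ncard = n → Conn G Uᶜ → TrivIn G h U := by
  intro n
  induction n with
  | zero =>
    intro U hU hn _ v p hp
    rw [Set.ncard_eq_zero hU] at hn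
    have := hp v p.start_mem_support
    simp [hn] at this
  | succ n ih =>
    intro U hU hn hUc
    apply triv_step h hG hinv HP U hU hUc
    rintro s hs ⟨y, hy, hsy⟩
    apply ih _ (hU.subset Set.sdiff_subset)
    · rw [Set.ncard_sdiff_singleton_of_mem hs, hn]; rfl
    · exact conn_compl_diff hUc hy hsy

theorem hol_trivial [G.LocallyFinite] (hG : Good G)
    (hinv : ∀ u v, G.Adj u v → h v u = (h u v)⁻¹)
    (HP : ∀ (v : V) (c : G.Walk v v), c.IsCycle →
      (∀ a ∈ c.support, ∀ b ∈ c.support, G.Adj a b → s(a, b) ∈ c.edges) →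
      Conn G {x | x ∈ c.support}ᶜ → hol h c = 1)
    (v : V) (p : G.Walk v v) : hol h p = 1 := by
  classical
  set S : Set V := {x | x ∈ p.support} with hS
  have hSf : S.Finite := List.finite_toSet p.support
  obtain ⟨x, hx⟩ := hG.oex S hSf
  set U := (reach G Sᶜ x)ᶜ with hUd
  have hSU : S ⊆ U := by
    intro y hy hy2; exact reach_subset hy2 hy
  have hUf : U.Finite := by
    have hcov : U ⊆ S ∪ ⋃ y ∈ (⋃ z ∈ S, G.neighborSet z) ∩ {y | (reach G Sᶜ y).Finite},
        reach G Sᶜ y := by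
      intro z hz
      by_cases hzS : z ∈ S
      · exact Or.inl hzS
      right
      obtain ⟨q, -⟩ := hG.conn z trivial v trivial
      obtain ⟨d, hd, h1, h2⟩ := q.exists_boundary_dart (reach G Sᶜ z) (mem_reach_self hzS)
        (fun hv => reach_subset hv p.start_mem_support)
      have hdS : d.snd ∈ S := by
        by_contra hn; exact h2 (reach_adj h1 d.adj hn)
      have hfin : (reach G Sᶜ d.fst).Finite := by
        by_contra hinf
        exact hz (reach_trans (hG.oe S hSf x d.fst hx hinf) (reach_symm h1))
      simp only [Set.mem_iUnion]
      exact ⟨d.fst, ⟨Set.mem_biUnion hdS d.adj.symm, hfin⟩, reach_symm h1⟩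
    apply Set.Finite.subset _ hcov
    apply hSf.union
    apply Set.Finite.biUnion
    · apply Set.Finite.subset (hSf.biUnion (fun z _ => Set.toFinite (G.neighborSet z)))
      exact Set.inter_subset_left
    · rintro y ⟨-, hy⟩; exact hy
  have := triv_all h hG hinv HP _ U hUf rfl (by rw [hUd, compl_compl]; exact conn_reach _ _)
  exact this v p (fun y hy => hSU hy)

end hol

end PG

namespace PG

variable {V : Type*} {G : SimpleGraph V}

/-- vertex sets of peripheral cycles -/
def PSet (G : SimpleGraph V) (X : Set V) : Prop :=
  ∃ (v : V) (c : G.Walk v v), c.IsCycle ∧ {x | x ∈ c.support} = X ∧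
    (∀ a ∈ X, ∀ b ∈ X, G.Adj a b → s(a, b) ∈ c.edges) ∧ Conn G Xᶜ

theorem PSet.conn_compl {X : Set V} (h : PSet G X) : Conn G Xᶜ := by
  obtain ⟨v, c, -, -, -, h⟩ := h; exact h

theorem PSet.conn {X : Set V} (h : PSet G X) : Conn G X := by
  obtain ⟨v, c, -, rfl, -⟩ := h; exact conn_support c

theorem PSet.finite {X : Set V} (h : PSet G X) : X.Finite := by
  obtain ⟨v, c, -, rfl, -⟩ := h; exact List.finite_toSet c.support

theorem PSet.third {X : Set V} (h : PSet G X) (s t : V) : ∃ z ∈ X, z ≠ s ∧ z ≠ t := by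
  classical
  obtain ⟨v, c, hc, rfl, -⟩ := h
  by_contra hcon
  push Not at hcon
  have h3 := hc.three_le_length
  have : c.support.tail.toFinset ⊆ {s, t} := by
    intro x hx
    have := hcon x (List.mem_of_mem_tail (List.mem_toFinset.mp hx))
    simp only [Finset.mem_insert, Finset.mem_singleton]
    tauto
  have h4 := Finset.card_le_card this
  rw [List.toFinset_card_of_nodup hc.support_nodup] at h4
  have h5 := Finset.card_le_two (a := s) (b := t)
  simp at h4; omega

theorem PSet.nbr_ncard {X : Set V} (h : PSet G X) {u : V} (hu : u ∈ X) :
    {w | w ∈ X ∧ G.Adj u w}.ncard = 2 := by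
  obtain ⟨v, c, hc, rfl, hch, -⟩ := h
  rw [← hc.ncard_neighborSet_toSubgraph_eq_two hu]
  congr 1
  ext w
  simp only [Set.mem_ofPred_eq, Subgraph.mem_neighborSet]
  rw [← Subgraph.mem_edgeSet, Walk.mem_edges_toSubgraph]
  constructor
  · rintro ⟨h1, h2⟩; exact hch u hu w h1 h2
  · intro h1
    exact ⟨c.snd_mem_support_of_mem_edges h1, c.adj_of_mem_edges h1⟩

/-- a cycle inside a peripheral cycle is that cycle -/
theorem PSet.cycle_inside {X : Set V} (h : PSet G X) {v : V} (c : G.Walk v v) (hc : c.IsCycle)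
    (hcX : ∀ x ∈ c.support, x ∈ X) : X ⊆ {x | x ∈ c.support} ∧
      (∀ a ∈ X, ∀ b ∈ X, G.Adj a b → s(a, b) ∈ c.edges) := by
  have key : ∀ a ∈ c.support, ∀ b ∈ X, G.Adj a b → s(a, b) ∈ c.edges := by
    intro a ha b hb hab
    have h1 := hc.ncard_neighborSet_toSubgraph_eq_two ha
    have h2 := h.nbr_ncard (hcX a ha)
    have h3 : c.toSubgraph.neighborSet a ⊆ {w | w ∈ X ∧ G.Adj a w} := by
      intro w hw
      refine ⟨hcX w ?_, c.toSubgraph.adj_sub hw⟩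
      have := c.toSubgraph.edge_vert (Subgraph.Adj.symm hw)
      simpa using this
    have hfin : {w | w ∈ X ∧ G.Adj a w}.Finite := h.finite.subset (fun _ h => h.1)
    have h4 := Set.eq_of_subset_of_ncard_le h3 (by rw [h1, h2]) hfin
    have h5 : b ∈ c.toSubgraph.neighborSet a := by rw [h4]; exact ⟨hb, hab⟩
    rw [← Walk.mem_edges_toSubgraph, Subgraph.mem_edgeSet]
    exact h5
  have hsub : X ⊆ {x | x ∈ c.support} := by
    apply h.conn.eq_of_closed (hcX v c.start_mem_support) c.start_mem_support
    intro a b ha _ hb hab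
    exact c.snd_mem_support_of_mem_edges (key a ha b hb hab)
  exact ⟨hsub, fun a ha b hb hab => key a (hsub ha) b hb hab⟩

theorem PSet.eq_of_subset {X Y : Set V} (hX : PSet G X) (hY : PSet G Y) (h : X ⊆ Y) : X = Y := by
  apply h.antisymm
  obtain ⟨v, c, hc, rfl, -⟩ := hX
  exact (hY.cycle_inside c hc h).1

theorem mem_tail_of_ne {u v y : V} {p : G.Walk u v} (h : y ∈ p.support) (hne : y ≠ u) :
    y ∈ p.support.tail := by
  rw [← Walk.cons_tail_support] at h
  exact (List.mem_cons.mp h).resolve_left hne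

theorem cyc_rot {u v : V} {A : G.Walk u v} {B : G.Walk v u} (h : (A.append B).IsCycle) :
    (B.append A).IsCycle := by
  rw [Walk.isCycle_def] at h ⊢
  obtain ⟨h1, h2, h3⟩ := h
  refine ⟨?_, ?_, ?_⟩
  · rw [Walk.isTrail_def, Walk.edges_append] at h1 ⊢
    exact List.perm_append_comm.nodup h1
  · intro hn
    apply h2
    have hl := congrArg Walk.length hn
    simp only [Walk.length_append, Walk.length_nil] at hl
    have : (A.append B).length = 0 := by rw [Walk.length_append]; omega
    exact Walk.length_eq_zero_iff.mp this |>.eq_nil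
  · rw [Walk.tail_support_append] at h3 ⊢
    exact List.perm_append_comm.nodup h3

theorem two_paths {x y : V} {A : G.Walk x y} {B : G.Walk y x} (h : (A.append B).IsCycle)
    (hne : x ≠ y) : A.IsPath ∧ B.IsPath ∧ ∀ z ∈ A.support, z ∈ B.support → z = x ∨ z = y := by
  refine ⟨h.isPath_of_append_left (fun hn => hne hn.eq.symm),
    h.isPath_of_append_right (fun hn => hne hn.eq), ?_⟩
  intro z hA hB
  by_contra hcon
  push Not at hcon
  have h3 := h.support_nodup
  rw [Walk.tail_support_append] at h3
  exact List.disjoint_of_nodup_append h3 (mem_tail_of_ne hA hcon.1) (mem_tail_of_ne hB hcon.2)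

theorem cycle_of_paths {x y z : V} {P M : G.Walk x y} (hP : P.IsPath) (hM : M.IsPath)
    (hi : ∀ z ∈ P.support, z ∈ M.support → z = x ∨ z = y) (hz : z ∈ P.support)
    (hzx : z ≠ x) (hzy : z ≠ y) : (P.append M.reverse).IsCycle := by
  apply hP.isCycle_append hM.reverse
  · intro w h1 h2
    have h1' := List.mem_of_mem_tail h1
    have h2' := List.mem_of_mem_tail h2
    rw [Walk.support_reverse, List.mem_reverse] at h2'
    rcases hi w h1' h2' with rfl | rfl
    · have := hP.support_nodup
      rw [← Walk.cons_tail_support, List.nodup_cons] at this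
      exact this.1 h1
    · have := hM.reverse.support_nodup
      rw [← Walk.cons_tail_support, List.nodup_cons] at this
      exact this.1 h2
  · left
    cases P with
    | nil => simp at hz; exact absurd hz hzx
    | cons h q =>
      cases q with
      | nil =>
        simp at hz
        tauto
      | cons h' q => simp

theorem PSet.split {X : Set V} (h : PSet G X) {x y : V} (hx : x ∈ X) (hy : y ∈ X) (hne : x ≠ y) :
    ∃ P P' : G.Walk x y, P.IsPath ∧ P'.IsPath ∧
      (∀ z ∈ P.support, z ∈ P'.support → z = x ∨ z = y) ∧
      (∀ z, z ∈ X ↔ z ∈ P.support ∨ z ∈ P'.support) ∧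
      (∀ a ∈ X, ∀ b ∈ X, G.Adj a b → s(a, b) ∈ P.edges ∨ s(a, b) ∈ P'.edges) := by
  classical
  obtain ⟨v, c, hc, rfl, hch, -⟩ := h
  have hc' : (c.rotate x hx).IsCycle := hc.rotate hx
  have hsup : ∀ z, z ∈ (c.rotate x hx).support ↔ z ∈ c.support := fun z =>
    Walk.mem_support_rotate_iff c x hx
  have hed : ∀ e, e ∈ (c.rotate x hx).edges ↔ e ∈ c.edges := fun e =>
    (c.rotate_edges x hx).perm.mem_iff
  generalize c.rotate x hx = c' at hc' hsup hed
  have hy' : y ∈ c'.support := (hsup y).mpr hy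
  have hspec := c'.take_spec hy'
  generalize c'.takeUntil y hy' = A at hspec
  generalize c'.dropUntil y hy' = B at hspec
  subst hspec
  obtain ⟨h1, h2, h3⟩ := two_paths hc' hne
  refine ⟨A, B.reverse, h1, h2.reverse, by simpa using h3, ?_, ?_⟩
  · intro z
    rw [Set.mem_ofPred_eq, ← hsup z]; simp [Walk.mem_support_append_iff]
  · intro a ha b hb hab
    have := (hed _).mpr (hch a ha b hb hab)
    simpa [Walk.edges_append] using this

theorem PSet.ear {X2 X1 : Set V} (h : PSet G X2) {q a b : V} (hq : q ∈ X2) (hq1 : q ∉ X1)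
    (ha : a ∈ X2) (ha1 : a ∈ X1) (hb : b ∈ X2) (hb1 : b ∈ X1) (hab : a ≠ b) :
    ∃ (x y : V) (M1 : G.Walk x q) (M2 : G.Walk q y) (N : G.Walk x y), x ≠ y ∧ x ∈ X1 ∧ y ∈ X1 ∧
      (M1.append M2).IsPath ∧ N.IsPath ∧
      (∀ z ∈ (M1.append M2).support, z ∈ N.support → z = x ∨ z = y) ∧
      (∀ z, z ∈ X2 ↔ z ∈ (M1.append M2).support ∨ z ∈ N.support) ∧
      (∀ z ∈ (M1.append M2).support, z ∈ X1 → z = x ∨ z = y) ∧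
      (∀ a ∈ X2, ∀ b ∈ X2, G.Adj a b → s(a, b) ∈ (M1.append M2).edges ∨ s(a, b) ∈ N.edges) := by
  classical
  obtain ⟨v, c, hc, rfl, hch, -⟩ := h
  have hc' : (c.rotate q hq).IsCycle := hc.rotate hq
  have hsup : ∀ z, z ∈ (c.rotate q hq).support ↔ z ∈ c.support := fun z =>
    Walk.mem_support_rotate_iff c q hq
  have hed : ∀ e, e ∈ (c.rotate q hq).edges ↔ e ∈ c.edges := fun e =>
    (c.rotate_edges q hq).perm.mem_iff
  generalize c.rotate q hq = c' at hc' hsup hed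
  obtain ⟨y, hy, M2, N, rfl, hM2⟩ := first_hit c' X1 ⟨a, (hsup a).mpr ha, ha1⟩
  obtain ⟨x, hx, Q, M1, rfl, hM1⟩ := last_hit N X1 ⟨y, N.start_mem_support, hy⟩
  have hqy : q ≠ y := by rintro rfl; exact hq1 hy
  have hN := (two_paths hc' hqy).2.1
  have hxy : x ≠ y := by
    rintro rfl
    have := closed_path_nil hN.of_append_left
    subst this
    have : ∀ z ∈ c.support, z ∈ X1 → z = x := by
      intro z hz hz1
      rw [← hsup] at hz
      simp only [Walk.mem_support_append_iff, Walk.support_nil, List.mem_singleton] at hz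
      rcases hz with h | h | h
      · exact hM2 z h hz1
      · exact h
      · exact hM1 z h hz1
    exact hab ((this a ha ha1).trans (this b hb hb1).symm)
  have hc2 : ((M1.append M2).append Q).IsCycle := by
    rw [← Walk.append_assoc] 
    apply cyc_rot
    rw [← Walk.append_assoc] 
    exact hc'
  obtain ⟨h1, h2, h3⟩ := two_paths hc2 hxy
  refine ⟨x, y, M1, M2, Q.reverse, hxy, hx, hy, h1, h2.reverse, by simpa using h3, ?_, ?_, ?_⟩
  · intro z
    rw [Set.mem_ofPred_eq, ← hsup z]
    simp only [Walk.mem_support_append_iff, Walk.support_reverse, List.mem_reverse]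
    tauto
  · intro z hz hz1
    rcases (Walk.mem_support_append_iff _ _).mp hz with h | h
    · exact Or.inl (hM1 z h hz1)
    · exact Or.inr (hM2 z h hz1)
  · intro a ha b hb hab
    have := (hed _).mpr (hch a ha b hb hab)
    simp only [Walk.edges_append, Walk.edges_reverse, List.mem_append, List.mem_reverse] at this ⊢
    tauto

theorem conn_bridge {S A B : Set V} (hS : Conn G S) {a0 b0 : V} (ha : a0 ∈ A) (haS : a0 ∈ S)
    (hb : b0 ∈ B) (hbS : b0 ∈ S) : ∃ a ∈ A, ∃ b ∈ B, ∃ W : G.Walk a b, W.IsPath ∧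
      (∀ z ∈ W.support, z ∈ S) ∧ (∀ z ∈ W.support, z ∈ A → z = a) ∧
      (∀ z ∈ W.support, z ∈ B → z = b) := by
  classical
  obtain ⟨w, hw⟩ := hS a0 haS b0 hbS
  obtain ⟨a, haA, w1, w2, rfl, h2⟩ := last_hit w A ⟨a0, w.start_mem_support, ha⟩
  obtain ⟨b, hbB, w3, w4, rfl, h3⟩ := first_hit w2 B ⟨b0, w2.end_mem_support, hb⟩
  have hsub : ∀ z ∈ w3.bypass.support, z ∈ w3.support := fun z hz =>
    w3.support_bypass_subset_support hz
  refine ⟨a, haA, b, hbB, w3.bypass, w3.bypass_isPath, ?_, ?_, ?_⟩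
  · intro z hz; apply hw; simp [Walk.mem_support_append_iff, hsub z hz]
  · intro z hz; apply h2; simp [Walk.mem_support_append_iff, hsub z hz]
  · intro z hz; exact h3 z (hsub z hz)

/-- bigon crossing lemma -/
theorem bigon (A : Angle G) {C : Set V} {x y q p p' : V} (P P' : G.Walk x y)
    (hP : P.IsPath) (hP' : P'.IsPath)
    (hi : ∀ z ∈ P.support, z ∈ P'.support → z = x ∨ z = y)
    (hC : ∀ z, z ∈ C ↔ z ∈ P.support ∨ z ∈ P'.support) (hCc : Conn G Cᶜ) (hq : q ∉ C)
    (Q1 : G.Walk x q) (Q2 : G.Walk y q)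
    (hQ1 : ∀ z ∈ Q1.support, z ∈ C → z = x) (hQ2 : ∀ z ∈ Q2.support, z ∈ C → z = y)
    (hp : p ∈ P.support) (hpx : p ≠ x) (hpy : p ≠ y)
    (hp' : p' ∈ P'.support) (hpx' : p' ≠ x) (hpy' : p' ≠ y)
    (W : G.Walk p p') (hW : W.IsPath) (hWC : ∀ z ∈ W.support, z ∈ C → z = p ∨ z = p')
    (hW1 : List.Disjoint W.support Q1.support) (hW2 : List.Disjoint W.support Q2.support)
    (hna : ¬ G.Adj p p') : False := by
  classical
  have hpP' : p ∉ P'.support := fun h => by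
    rcases hi p hp h with h | h <;> contradiction
  have hpP : p' ∉ P.support := fun h => by
    rcases hi p' h hp' with h | h <;> contradiction
  have hs1 := P.take_spec hp
  have hs2 := P'.take_spec hp'
  generalize P.takeUntil p hp = Pa at hs1
  generalize P.dropUntil p hp = Pb at hs1
  generalize P'.takeUntil p' hp' = Pa' at hs2
  generalize P'.dropUntil p' hp' = Pb' at hs2
  subst hs1 hs2
  simp only [Walk.mem_support_append_iff] at hC hi hpP hpP'
  have xPb : x ∉ Pb.support := fun h => hpx (path_append_inter hP Pa.start_mem_support h).symm
  have yPa : y ∉ Pa.support := fun h => hpy (path_append_inter hP h Pb.end_mem_support).symm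
  have xPb' : x ∉ Pb'.support := fun h => hpx' (path_append_inter hP' Pa'.start_mem_support h).symm
  have yPa' : y ∉ Pa'.support := fun h => hpy' (path_append_inter hP' h Pb'.end_mem_support).symm
  cases W with
  | nil => exact hpP (Or.inl Pa.end_mem_support)
  | cons hpr R3 =>
    rename_i r
    rw [Walk.cons_isPath_iff] at hW
    have hR3 : ∀ z ∈ R3.support, z ∈ C → z = p' := by
      intro z hz hzC
      rcases hWC z (by simp [hz]) hzC with rfl | h
      · exact absurd hz hW.2
      · exact h
    have hrC : r ∉ C := by
      intro h
      have := hR3 r R3.start_mem_support h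
      subst this; exact hna hpr
    obtain ⟨K, hK⟩ := hCc r hrC q hq
    simp only [Walk.support_cons, List.disjoint_cons_left] at hW1 hW2
    have hKd : ∀ z, z ∈ K.support → z ∈ C → False := fun z h1 h2 => hK z h1 h2
    apply cross A Pa.reverse Pa' Pb Pb'.reverse (Walk.cons hpr .nil) R3 Q1 Q2 K
    all_goals
      intro z hz1 hz2
      try simp only [Walk.support_reverse, List.mem_reverse, Walk.mem_support_append_iff,
        Walk.support_cons, Walk.support_nil, List.mem_cons, List.not_mem_nil, or_false] at hz1
      try simp only [Walk.support_reverse, List.mem_reverse, Walk.mem_support_append_iff,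
        Walk.support_cons, Walk.support_nil, List.mem_cons, List.not_mem_nil, or_false] at hz2
    · rcases hi z (Or.inl hz1) (Or.inr hz2) with rfl | rfl <;> contradiction
    · have := hR3 z hz2 ((hC z).mpr (by tauto)); subst this; exact hpP (Or.inl hz1)
    · rcases hi z (Or.inr hz1) (Or.inl hz2) with rfl | rfl <;> contradiction
    · have := hR3 z hz2 ((hC z).mpr (by tauto)); subst this; exact hpP (Or.inr hz1)
    · rcases hz1 with rfl | rfl
      · exact hpP' (Or.inl hz2)
      · exact hrC ((hC z).mpr (by tauto))
    · rcases hz1 with rfl | rfl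
      · exact hpP' (Or.inr hz2)
      · exact hrC ((hC z).mpr (by tauto))
    · exact hKd z hz2 ((hC z).mpr (by tauto))
    · exact hKd z hz2 ((hC z).mpr (by tauto))
    · have := hQ1 z hz2 ((hC z).mpr (by tauto)); subst this; tauto
    · have hr := R3.start_mem_support
      rcases hz1 with (rfl | rfl) | hz1
      · exact hW1.1 hz2
      · exact hW1.2 hr hz2
      · exact hW1.2 hz1 hz2
    · have := hQ2 z hz2 ((hC z).mpr (by tauto)); subst this; tauto
    · have hr := R3.start_mem_support
      rcases hz1 with (rfl | rfl) | hz1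
      · exact hW2.1 hz2
      · exact hW2.2 hr hz2
      · exact hW2.2 hz1 hz2

theorem path_interior_nonempty {x y : V} (P : G.Walk x y) (hP : P.IsPath) (hne : x ≠ y)
    (hna : ¬ G.Adj x y) : ∃ p ∈ P.support, p ≠ x ∧ p ≠ y := by
  cases P with
  | nil => exact absurd rfl hne
  | cons h q =>
    rename_i b
    refine ⟨b, by simp, h.ne', ?_⟩
    rintro rfl; exact hna h

end PG

namespace PG

variable {V : Type*} {G : SimpleGraph V}

theorem bhelp (A : Angle G) {X1 : Set V} {x y a b : V} (P P' M : G.Walk x y)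
    (hP : P.IsPath) (hP' : P'.IsPath) (hM : M.IsPath)
    (h1 : ∀ z ∈ P.support, z ∈ P'.support → z = x ∨ z = y)
    (h2 : ∀ z ∈ M.support, z ∈ X1 → z = x ∨ z = y)
    (hX : ∀ z, z ∈ X1 ↔ z ∈ P.support ∨ z ∈ P'.support) (hXc : Conn G X1ᶜ)
    (hed : ∀ a ∈ X1, ∀ b ∈ X1, G.Adj a b → s(a, b) ∈ P.edges ∨ s(a, b) ∈ P'.edges)
    (hne : x ≠ y) (hna : ¬ G.Adj x y)
    (ha : a ∈ P.support) (hax : a ≠ x) (hay : a ≠ y)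
    (hb : b ∈ P'.support) (hbx : b ≠ x) (hby : b ≠ y)
    (W : G.Walk a b) (hW : W.IsPath) (hWM : List.Disjoint W.support M.support)
    (hWX : ∀ z ∈ W.support, z ∈ X1 → z = a ∨ z = b) : False := by
  classical
  obtain ⟨q, hq, hqx, hqy⟩ := path_interior_nonempty M hM hne hna
  have hqX : q ∉ X1 := fun h => by rcases h2 q hq h with h | h <;> contradiction
  have hs := M.take_spec hq
  generalize M.takeUntil q hq = M1 at hs
  generalize M.dropUntil q hq = M2 at hs
  subst hs
  simp only [Walk.mem_support_append_iff] at h2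
  have hWM' : ∀ z ∈ W.support, z ∉ M1.support ∧ z ∉ M2.support := by
    intro z hz
    have := hWM hz
    simp only [Walk.mem_support_append_iff] at this
    tauto
  refine bigon A P P' hP hP' h1 hX hXc hqX M1 M2.reverse ?_ ?_ ha hax hay hb hbx hby W hW hWX ?_ ?_ ?_
  · intro z hz hzX
    rcases h2 z (Or.inl hz) hzX with h | rfl
    · exact h
    · exact absurd (path_append_inter hM hz M2.end_mem_support).symm hqy
  · intro z hz hzX
    simp at hz
    rcases h2 z (Or.inr hz) hzX with rfl | h
    · exact absurd (path_append_inter hM M1.start_mem_support hz).symm hqx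
    · exact h
  · intro z hz hz'; exact (hWM' z hz).1 hz'
  · intro z hz hz'; simp at hz'; exact (hWM' z hz).2 hz'
  · intro hab
    rcases hed a ((hX a).mpr (Or.inl ha)) b ((hX b).mpr (Or.inr hb)) hab with h | h
    · rcases h1 b (P.snd_mem_support_of_mem_edges h) hb with h | h <;> contradiction
    · rcases h1 a ha (P'.fst_mem_support_of_mem_edges h) with h | h <;> contradiction

theorem three_arcs (hG : Good G) (A : Angle G) {X1 X2 : Set V} {x y : V} (P P' M : G.Walk x y)
    (hP : P.IsPath) (hP' : P'.IsPath) (hM : M.IsPath)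
    (h1 : ∀ z ∈ P.support, z ∈ P'.support → z = x ∨ z = y)
    (h2 : ∀ z ∈ P.support, z ∈ M.support → z = x ∨ z = y)
    (h3 : ∀ z ∈ P'.support, z ∈ M.support → z = x ∨ z = y)
    (hX1 : ∀ z, z ∈ X1 ↔ z ∈ P.support ∨ z ∈ P'.support) (hXc1 : Conn G X1ᶜ)
    (hed1 : ∀ a ∈ X1, ∀ b ∈ X1, G.Adj a b → s(a, b) ∈ P.edges ∨ s(a, b) ∈ P'.edges)
    (hX2 : ∀ z, z ∈ X2 ↔ z ∈ P.support ∨ z ∈ M.support) (hXc2 : Conn G X2ᶜ)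
    (hed2 : ∀ a ∈ X2, ∀ b ∈ X2, G.Adj a b → s(a, b) ∈ P.edges ∨ s(a, b) ∈ M.edges)
    (hne : x ≠ y) (hna : ¬ G.Adj x y) : False := by
  obtain ⟨p, hp, hpx, hpy⟩ := path_interior_nonempty P hP hne hna
  obtain ⟨p', hp', hpx', hpy'⟩ := path_interior_nonempty P' hP' hne hna
  obtain ⟨a, ⟨ha, hax, hay⟩, b, hb, W, hW, hWS, hWA, hWB⟩ := conn_bridge (hG.conn_pair x y)
    (A := {z | z ∈ P.support ∧ z ≠ x ∧ z ≠ y})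
    (B := {z | (z ∈ P'.support ∨ z ∈ M.support) ∧ z ≠ x ∧ z ≠ y})
    (a0 := p) (b0 := p') ⟨hp, hpx, hpy⟩ (by simp [hpx, hpy]) ⟨Or.inl hp', hpx', hpy'⟩
    (by simp [hpx', hpy'])
  have hWx : ∀ z ∈ W.support, z ≠ x ∧ z ≠ y := by
    intro z hz
    have := hWS z hz
    simpa using this
  obtain ⟨hb | hb, hbx, hby⟩ := hb
  · refine bhelp A P P' M hP hP' hM h1 ?_ hX1 hXc1 hed1 hne hna ha hax hay hb hbx hby W hW ?_ ?_
    · intro z hz hzX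
      rcases (hX1 z).mp hzX with h | h
      · exact h2 z h hz
      · exact h3 z h hz
    · intro z hz hzM
      have h4 := hWx z hz
      have := hWB z hz ⟨Or.inr hzM, h4⟩
      subst this
      rcases h3 z hb hzM with h | h <;> contradiction
    · intro z hz hzX
      rcases (hX1 z).mp hzX with h | h
      · exact Or.inl (hWA z hz ⟨h, hWx z hz⟩)
      · exact Or.inr (hWB z hz ⟨Or.inl h, hWx z hz⟩)
  · refine bhelp A P M P' hP hM hP' h2 ?_ hX2 hXc2 hed2 hne hna ha hax hay hb hbx hby W hW ?_ ?_
    · intro z hz hzX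
      rcases (hX2 z).mp hzX with h | h
      · exact h1 z h hz
      · exact h3 z hz h
    · intro z hz hzM
      have h4 := hWx z hz
      have := hWB z hz ⟨Or.inl hzM, h4⟩
      subst this
      rcases h3 z hzM hb with h | h <;> contradiction
    · intro z hz hzX
      rcases (hX2 z).mp hzX with h | h
      · exact Or.inl (hWA z hz ⟨h, hWx z hz⟩)
      · exact Or.inr (hWB z hz ⟨Or.inr h, hWx z hz⟩)

/-- two distinct peripheral cycles share at most two vertices -/
theorem PSet.two_common (hG : Good G) (A : Angle G) {X1 X2 : Set V} (h1 : PSet G X1)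
    (h2 : PSet G X2) (hne : X1 ≠ X2) {a b c : V} (hab : a ≠ b) (hac : a ≠ c) (hbc : b ≠ c)
    (ha1 : a ∈ X1) (ha2 : a ∈ X2) (hb1 : b ∈ X1) (hb2 : b ∈ X2) (hc1 : c ∈ X1) (hc2 : c ∈ X2) :
    False := by
  classical
  obtain ⟨q, hq2, hq1⟩ : ∃ q ∈ X2, q ∉ X1 := by
    by_contra hcon
    push Not at hcon
    exact hne (h2.eq_of_subset h1 hcon).symm
  obtain ⟨x, y, M1, M2, N, hxy, hx, hy, hM, hN, hMN, hX2, hMX1, hed2⟩ :=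
    h2.ear hq2 hq1 ha2 ha1 hb2 hb1 hab
  have hqM : q ∈ (M1.append M2).support := by simp [Walk.mem_support_append_iff]
  have hqx : q ≠ x := by rintro rfl; contradiction
  have hqy : q ≠ y := by rintro rfl; contradiction
  have hWd := fun (z : V) (hz : z ∈ (M1.append M2).support) => hz
  have hM2' : ∀ z, z ∈ M1.support ∨ z ∈ M2.support ↔ z ∈ (M1.append M2).support := fun z =>
    (Walk.mem_support_append_iff _ _).symm
  obtain ⟨P, P', hP, hP', hPP, hX1, hed1⟩ := h1.split hx hy hxy
  generalize hMdef : M1.append M2 = M at *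
  have hx2 : x ∈ X2 := (hX2 x).mpr (Or.inl M.start_mem_support)
  have hy2 : y ∈ X2 := (hX2 y).mpr (Or.inl M.end_mem_support)
  have hna : ¬ G.Adj x y := by
    intro hadj
    rcases hed2 x hx2 y hy2 hadj with h | h
    · obtain ⟨_, this⟩ := path_edge M hM h
      rw [this] at hqM
      simp at hqM; tauto
    · obtain ⟨_, hNe⟩ := path_edge N hN h
      have hcom : ∀ z ∈ X1, z ∈ X2 → z = x ∨ z = y := by
        intro z hz1 hz2
        rcases (hX2 z).mp hz2 with h | h
        · exact hMX1 z h hz1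
        · rw [hNe] at h; simpa using h
      have e1 := hcom a ha1 ha2
      have e2 := hcom b hb1 hb2
      have e3 := hcom c hc1 hc2
      grind
  have caseb : ∀ (P P' : G.Walk x y), P.IsPath → P'.IsPath →
      (∀ z ∈ P.support, z ∈ P'.support → z = x ∨ z = y) →
      (∀ z, z ∈ X1 ↔ z ∈ P.support ∨ z ∈ P'.support) →
      (∀ a ∈ X1, ∀ b ∈ X1, G.Adj a b → s(a, b) ∈ P.edges ∨ s(a, b) ∈ P'.edges) →
      (∀ z ∈ P.support, z ∈ X2) → False := by
    intro P P' hP hP' hPP hX1 hed1 hsub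
    obtain ⟨p, hp, hpx, hpy⟩ := path_interior_nonempty P hP hxy hna
    have hPM : ∀ z ∈ P.support, z ∈ M.support → z = x ∨ z = y := fun z hz hz' =>
      hMX1 z hz' ((hX1 z).mpr (Or.inl hz))
    have hcyc := cycle_of_paths hP hM hPM hp hpx hpy
    have hin := h2.cycle_inside _ hcyc (by
      intro z hz
      simp only [Walk.mem_support_append_iff, Walk.support_reverse, List.mem_reverse] at hz
      rcases hz with h | h
      · exact hsub z h
      · exact (hX2 z).mpr (Or.inl h))
    refine three_arcs hG A P P' M hP hP' hM hPP hPM ?_ hX1 h1.conn_compl hed1 (X2 := X2) ?_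
      h2.conn_compl ?_ hxy hna
    · intro z hz hz'; exact hMX1 z hz' ((hX1 z).mpr (Or.inr hz))
    · intro z
      constructor
      · intro hz
        have := hin.1 hz
        simpa [Walk.mem_support_append_iff] using this
      · rintro (h | h)
        · exact hsub z h
        · exact (hX2 z).mpr (Or.inl h)
    · intro a ha b hb hab
      have := hin.2 a ha b hb hab
      simpa [Walk.edges_append] using this
  by_cases hs1 : ∀ z ∈ P.support, z ∈ X2
  · exact caseb P P' hP hP' hPP hX1 hed1 hs1
  by_cases hs2 : ∀ z ∈ P'.support, z ∈ X2
  · exact caseb P' P hP' hP (fun z h h' => hPP z h' h) (fun z => (hX1 z).trans or_comm)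
      (fun a ha b hb hab => (hed1 a ha b hb hab).symm) hs2
  push Not at hs1 hs2
  obtain ⟨p, hp, hpX⟩ := hs1
  obtain ⟨p', hp', hpX'⟩ := hs2
  have nn : ∀ z, z ∉ X2 → z ≠ x ∧ z ≠ y := by
    intro z hz; constructor <;> rintro rfl <;> contradiction
  obtain ⟨a, ⟨ha, hax, hay⟩, b, ⟨hb, hbx, hby⟩, W, hW, hWS, hWA, hWB⟩ := conn_bridge h2.conn_compl
    (A := {z | z ∈ P.support ∧ z ≠ x ∧ z ≠ y})
    (B := {z | z ∈ P'.support ∧ z ≠ x ∧ z ≠ y})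
    (a0 := p) (b0 := p') ⟨hp, nn p hpX⟩ hpX ⟨hp', nn p' hpX'⟩ hpX'
  refine bhelp A P P' M hP hP' hM hPP hMX1 hX1 h1.conn_compl hed1 hxy hna ha hax hay hb hbx hby W hW
    ?_ ?_
  · intro z hz hzM; exact hWS z hz ((hX2 z).mpr (Or.inl hzM))
  · intro z hz hzX
    rcases (hX1 z).mp hzX with h | h
    · exact Or.inl (hWA z hz ⟨h, nn z (hWS z hz)⟩)
    · exact Or.inr (hWB z hz ⟨h, nn z (hWS z hz)⟩)

end PG

namespace PG

variable {V : Type*} {G : SimpleGraph V}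

theorem PSet.edge_split {X : Set V} (h : PSet G X) {u v : V} (hu : u ∈ X) (hv : v ∈ X)
    (huv : G.Adj u v) : ∃ (a : V) (L : G.Walk u a) (R : G.Walk a v), a ≠ u ∧ a ≠ v ∧
      (L.append R).IsPath ∧ ∀ z, z ∈ X ↔ z ∈ L.support ∨ z ∈ R.support := by
  classical
  have key : ∃ P : G.Walk u v, P.IsPath ∧ ∀ z, z ∈ X ↔ z ∈ P.support := by
    obtain ⟨P, P', hP, hP', -, hX, hed⟩ := h.split hu hv huv.ne
    rcases hed u hu v hv huv with h | h
    · obtain ⟨_, rfl⟩ := path_edge P hP h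
      refine ⟨P', hP', fun z => ?_⟩
      rw [hX]
      constructor
      · rintro (h | h)
        · simp at h
          rcases h with rfl | rfl
          · exact P'.start_mem_support
          · exact P'.end_mem_support
        · exact h
      · exact Or.inr
    · obtain ⟨_, rfl⟩ := path_edge P' hP' h
      refine ⟨P, hP, fun z => ?_⟩
      rw [hX]
      constructor
      · rintro (h | h)
        · exact h
        · simp at h
          rcases h with rfl | rfl
          · exact P.start_mem_support
          · exact P.end_mem_support
      · exact Or.inl
  obtain ⟨P, hP, hX⟩ := key
  obtain ⟨a, ha, hau, hav⟩ := h.third u v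
  have ha' := (hX a).mp ha
  refine ⟨a, P.takeUntil a ha', P.dropUntil a ha', hau, hav, ?_, ?_⟩
  · rw [P.take_spec]; exact hP
  · intro z
    rw [hX, ← Walk.mem_support_append_iff, P.take_spec]

/-- an edge lies on at most two peripheral cycles -/
theorem PSet.edge_three (hG : Good G) (A : Angle G) {X1 X2 X3 : Set V} (h1 : PSet G X1)
    (h2 : PSet G X2) (h3 : PSet G X3) (h12 : X1 ≠ X2) (h13 : X1 ≠ X3) (h23 : X2 ≠ X3)
    {u v : V} (huv : G.Adj u v) (hu1 : u ∈ X1) (hv1 : v ∈ X1) (hu2 : u ∈ X2) (hv2 : v ∈ X2)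
    (hu3 : u ∈ X3) (hv3 : v ∈ X3) : False := by
  obtain ⟨a, L1, R1, hau, hav, hp1, hX1⟩ := h1.edge_split hu1 hv1 huv
  obtain ⟨b, L2, R2, hbu, hbv, hp2, hX2⟩ := h2.edge_split hu2 hv2 huv
  obtain ⟨c, L3, R3, hcu, hcv, hp3, hX3⟩ := h3.edge_split hu3 hv3 huv
  have com : ∀ {X Y : Set V}, PSet G X → PSet G Y → X ≠ Y → u ∈ X → v ∈ X → u ∈ Y → v ∈ Y →
      ∀ z ∈ X, z ∈ Y → z = u ∨ z = v := by
    intro X Y hX hY hne a1 a2 a3 a4 z hz hz'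
    by_contra hcon
    push Not at hcon
    exact hX.two_common hG A hY hne huv.ne hcon.1.symm hcon.2.symm a1 a3 a2 a4 hz hz'
  have dis : ∀ {X Y : Set V} {a b : V} (L1 : G.Walk u a) (R1 : G.Walk a v) (L2 : G.Walk u b)
      (R2 : G.Walk b v), (L1.append R1).IsPath → (L2.append R2).IsPath →
      (∀ z ∈ X, z ∈ Y → z = u ∨ z = v) → (∀ z, z ∈ X ↔ z ∈ L1.support ∨ z ∈ R1.support) →
      (∀ z, z ∈ Y ↔ z ∈ L2.support ∨ z ∈ R2.support) → b ≠ u → a ≠ v →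
      List.Disjoint L1.support R2.support := by
    intro X Y a b L1 R1 L2 R2 hp1 hp2 hXY hX hY hbu hav z hz hz'
    rcases hXY z ((hX z).mpr (Or.inl hz)) ((hY z).mpr (Or.inr hz')) with rfl | rfl
    · exact hbu (path_append_inter hp2 L2.start_mem_support hz').symm
    · exact hav (path_append_inter hp1 hz R1.end_mem_support).symm
  have c12 := com h1 h2 h12 hu1 hv1 hu2 hv2
  have c13 := com h1 h3 h13 hu1 hv1 hu3 hv3
  have c23 := com h2 h3 h23 hu2 hv2 hu3 hv3
  have ha : a ∈ X1 := (hX1 a).mpr (Or.inl L1.end_mem_support)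
  have hb : b ∈ X2 := (hX2 b).mpr (Or.inl L2.end_mem_support)
  have hc : c ∈ X3 := (hX3 c).mpr (Or.inl L3.end_mem_support)
  have cst : ∀ {X : Set V} {a b c : V} (L : G.Walk u a) (R : G.Walk a v), PSet G X →
      (∀ z, z ∈ X ↔ z ∈ L.support ∨ z ∈ R.support) → b ∉ X → c ∉ X →
      DW A (L.append R) b - DW A (Walk.cons huv .nil) b
        = DW A (L.append R) c - DW A (Walk.cons huv .nil) c := by
    intro X a b c L R hX hXs hb hc
    obtain ⟨q, hq⟩ := hX.conn_compl b hb c hc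
    apply DW_const A _ _ q
    · intro z hz hz'
      rw [Walk.mem_support_append_iff, ← hXs] at hz
      exact hq z hz' hz
    · intro z hz hz'
      apply hq z hz'
      simp at hz
      rw [hXs]
      rcases hz with rfl | rfl
      · exact Or.inl L.start_mem_support
      · exact Or.inr R.end_mem_support
  have e1 := cst L1 R1 h1 hX1 (b := b) (c := c) (fun h => by rcases c12 b h hb with h | h <;> contradiction)
    (fun h => by rcases c13 c h hc with h | h <;> contradiction)
  have e2 := cst L2 R2 h2 hX2 (b := a) (c := c) (fun h => by rcases c12 a ha h with h | h <;> contradiction)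
    (fun h => by rcases c23 c h hc with h | h <;> contradiction)
  have e3 := cst L3 R3 h3 hX3 (b := a) (c := b) (fun h => by rcases c13 a ha h with h | h <;> contradiction)
    (fun h => by rcases c23 b hb h with h | h <;> contradiction)
  refine theta A L1 R1 L2 R2 L3 R3 (dis L1 R1 L2 R2 hp1 hp2 c12 hX1 hX2 hbu hav)
    (dis L1 R1 L3 R3 hp1 hp3 c13 hX1 hX3 hcu hav)
    (dis L2 R2 L1 R1 hp2 hp1 (fun z h h' => c12 z h' h) hX2 hX1 hau hbv)
    (dis L2 R2 L3 R3 hp2 hp3 c23 hX2 hX3 hcu hbv)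
    (dis L3 R3 L1 R1 hp3 hp1 (fun z h h' => c13 z h' h) hX3 hX1 hau hcv)
    (dis L3 R3 L2 R2 hp3 hp2 (fun z h h' => c23 z h' h) hX3 hX2 hbu hcv) ?_
  linear_combination -e1 + e2 - e3

/-- connectivity of the link of a vertex -/
theorem link_conn [G.LocallyFinite] (hG : Good G) {u w0 : V} (F : Set V) (h0 : w0 ∈ F)
    (hF : ∀ w ∈ F, G.Adj u w)
    (hcl : ∀ w ∈ F, ∀ w', G.Adj u w' → (∃ X, PSet G X ∧ u ∈ X ∧ w ∈ X ∧ w' ∈ X) → w' ∈ F) :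
    ∀ w, G.Adj u w → w ∈ F := by
  classical
  intro w hw
  by_contra hwF
  let g : Multiplicative (ZMod 2) := Multiplicative.ofAdd 1
  have hgg : g * g = 1 := by decide
  have hg1 : g ≠ 1 := by decide
  have hgi : g⁻¹ = g := by decide
  let h : V → V → Multiplicative (ZMod 2) := fun s t =>
    if (s = u ∧ t ∈ F) ∨ (t = u ∧ s ∈ F) then g else 1
  have huF : u ∉ F := fun h => (hF u h).ne rfl
  have hua : ∀ t, h u t = if t ∈ F then g else 1 := by
    intro t
    simp only [h, true_and]
    congr 1
    simp [huF]
  have hau : ∀ t, h t u = if t ∈ F then g else 1 := by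
    intro t
    simp only [h, true_and]
    congr 1
    simp [huF]
  have hinv : ∀ s t, G.Adj s t → h t s = (h s t)⁻¹ := by
    intro s t _
    have : h t s = h s t := by simp only [h]; congr 1; rw [or_comm]
    rw [this]
    simp only [h]; split_ifs <;> simp [hgi]
  have off : ∀ {s t : V} (p : G.Walk s t), u ∉ p.support → hol h p = 1 := by
    intro s t p
    induction p with
    | nil => simp
    | cons a p ih =>
      rename_i s t r
      intro hp
      simp only [Walk.support_cons, List.mem_cons, not_or] at hp
      rw [hol_cons, ih hp.2]
      have ht : t ≠ u := by rintro rfl; exact hp.2 p.start_mem_support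
      simp [h, Ne.symm hp.1, ht]
  have HP : ∀ (v : V) (c : G.Walk v v), c.IsCycle →
      (∀ a ∈ c.support, ∀ b ∈ c.support, G.Adj a b → s(a, b) ∈ c.edges) →
      Conn G {x | x ∈ c.support}ᶜ → hol h c = 1 := by
    intro v c hc hch hcc
    by_cases huc : u ∈ c.support
    · apply hol_rotate h c huc
      have hps : PSet G {x | x ∈ c.support} := ⟨v, c, hc, rfl, hch, hcc⟩
      have hc' := hc.rotate huc
      have hsup : ∀ z, z ∈ (c.rotate u huc).support ↔ z ∈ c.support := fun z =>
        Walk.mem_support_rotate_iff c u huc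
      generalize c.rotate u huc = c' at hc' hsup
      cases c' with
      | nil => simp
      | cons ha q =>
        rename_i a
        rw [Walk.cons_isCycle_iff] at hc'
        have hqp := hc'.1.reverse
        have haF : a ∈ {x | x ∈ c.support} := (hsup a).mp (by simp)
        have hqs : ∀ z ∈ q.reverse.support, z ∈ c.support := by
          intro z hz
          simp at hz
          rw [← hsup]; simp [hz]
        have hol_q : q = q.reverse.reverse := by simp
        rw [hol_cons, hol_q, hol_reverse h hinv]
        generalize q.reverse = q' at hqp hqs
        cases q' with
        | nil => exact absurd rfl ha.ne
        | cons hb q'' =>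
          rename_i b
          rw [Walk.cons_isPath_iff] at hqp
          have hbF : b ∈ {x | x ∈ c.support} := hqs b (by simp)
          rw [hol_cons, off q'' hqp.2, mul_one, hua, hua]
          have : a ∈ F ↔ b ∈ F := ⟨fun h' => hcl a h' b hb ⟨_, hps, huc, haF, hbF⟩,
            fun h' => hcl b h' a ha ⟨_, hps, huc, hbF, haF⟩⟩
          simp [this]
    · exact off c huc
  obtain ⟨p, hp⟩ := hG.conn_single u w0 (by simpa using (hF w0 h0).ne') w (by simpa using hw.ne')
  have := hol_trivial h hG hinv HP u (Walk.cons (hF w0 h0) (p.append (Walk.cons hw.symm .nil)))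
  rw [hol_cons, hol_append, off p (fun hu => hp u hu rfl), hol_cons, hol_nil, hua, hau] at this
  simp [h0, hwF] at this
  exact hg1 this

theorem PSet.image {X : Set V} (h : PSet G X) (α : G ≃g G) : PSet G (α '' X) := by
  obtain ⟨v, c, hc, rfl, hch, hcc⟩ := h
  refine ⟨_, c.map α.toHom, hc.map α.injective, ?_, ?_, ?_⟩
  · ext z
    simp
  · rintro _ ⟨a, ha, rfl⟩ _ ⟨b, hb, rfl⟩ hab
    have := hch a ha b hb ((α.map_adj_iff).mp hab)
    rw [Walk.edges_map]
    exact List.mem_map.mpr ⟨_, this, rfl⟩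
  · intro x hx y hy
    have hm : ∀ z, z ∈ (α '' {x | x ∈ c.support})ᶜ → α.symm z ∈ ({x | x ∈ c.support})ᶜ := by
      intro z hz h
      exact hz ⟨_, h, by simp⟩
    obtain ⟨p, hp⟩ := hcc _ (hm x hx) _ (hm y hy)
    refine ⟨(p.map α.toHom).copy (by simp) (by simp), ?_⟩
    intro w hw
    simp only [Walk.support_copy, Walk.support_map, List.mem_map] at hw
    obtain ⟨z, hz, rfl⟩ := hw
    rintro ⟨z', hz', h⟩
    have := α.injective h
    subst this
    exact hp _ hz hz'

theorem PSet.other {X : Set V} (h : PSet G X) {u w : V} (hu : u ∈ X) (hw : w ∈ X)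
    (huw : G.Adj u w) : ∃ w2 ∈ X, G.Adj u w2 ∧ w2 ≠ w ∧ ∀ z ∈ X, G.Adj u z → z = w ∨ z = w2 := by
  have h2 := h.nbr_ncard hu
  rw [Set.ncard_eq_two] at h2
  obtain ⟨a, b, hab, he⟩ := h2
  have hmem : ∀ z, (z ∈ X ∧ G.Adj u z) ↔ (z = a ∨ z = b) := by
    intro z
    have := Set.ext_iff.mp he z
    simpa using this
  have h1 := (hmem w).mp ⟨hw, huw⟩
  rcases h1 with rfl | rfl
  · refine ⟨b, ((hmem b).mpr (Or.inr rfl)).1, ((hmem b).mpr (Or.inr rfl)).2, hab.symm, ?_⟩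
    intro z hz hz'; exact (hmem z).mp ⟨hz, hz'⟩
  · refine ⟨a, ((hmem a).mpr (Or.inl rfl)).1, ((hmem a).mpr (Or.inl rfl)).2, hab, ?_⟩
    intro z hz hz'; exact ((hmem z).mp ⟨hz, hz'⟩).symm

theorem rigid [G.LocallyFinite] (hG : Good G) (A : Angle G) (α : G ≃g G) {v : V} (hv : α v = v)
    (hN : ∀ w, G.Adj v w → α w = w) : ∀ x, α x = x := by
  have step : ∀ v, (α v = v ∧ ∀ w, G.Adj v w → α w = w) → ∀ u, G.Adj v u →
      ∀ w, G.Adj u w → α w = w := by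
    rintro v ⟨hv, hN⟩ u hvu
    have hu : α u = u := hN u hvu
    have hinv : ∀ X, PSet G X → u ∈ X → v ∈ X → α '' X = X := by
      intro X hX huX hvX
      by_contra hne
      obtain ⟨w2, hw2, had, hw2u, -⟩ := hX.other hvX huX hvu
      exact (hX.image α).two_common hG A hX hne hvu.ne had.ne hw2u.symm ⟨v, hvX, hv⟩ hvX
        ⟨u, huX, hu⟩ huX ⟨w2, hw2, hN w2 had⟩ hw2
    have key := link_conn hG (u := u) (w0 := v)
      {w | G.Adj u w ∧ α w = w ∧ ∀ X, PSet G X → u ∈ X → w ∈ X → α '' X = X}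
      ⟨hvu.symm, hv, hinv⟩ (fun w hw => hw.1) ?_
    · intro w hw; exact (key w hw).2.1
    · rintro w ⟨hw, hw1, hw2⟩ w' hw' ⟨X, hX, huX, hwX, hwX'⟩
      have hαX := hw2 X hX huX hwX
      have hw'f : α w' = w' := by
        by_cases hww : w' = w
        · subst hww; exact hw1
        obtain ⟨w2, hw2X, had, hne, hall⟩ := hX.other huX hwX hw
        have e1 : w' = w2 := (hall w' hwX' hw').resolve_left hww
        have e2 : α w' ∈ X := by rw [← hαX]; exact ⟨w', hwX', rfl⟩
        have e3 : G.Adj u (α w') := by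
          have := (α.map_adj_iff).mpr hw'
          rwa [hu] at this
        rcases hall _ e2 e3 with h | h
        · exact absurd (α.injective (h.trans hw1.symm)) hww
        · rw [h, e1]
      refine ⟨hw', hw'f, ?_⟩
      intro Y hY huY hwY
      by_contra hne
      have hYX : Y ≠ X := by rintro rfl; exact hne hαX
      have hαYX : α '' Y ≠ X := by
        intro h
        rw [← hαX] at h
        exact hYX (α.injective.image_injective h)
      exact PSet.edge_three hG A (hY.image α) hY hX hne hαYX hYX hw' ⟨u, huY, hu⟩ ⟨w', hwY, hw'f⟩
        huY hwY huX hwX'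
  intro x
  have := hG.conn.eq_of_closed (T := {v | α v = v ∧ ∀ w, G.Adj v w → α w = w}) (x := v)
    (Set.mem_univ _) ⟨hv, hN⟩ (fun a b ha _ _ hab => ⟨ha.2 b hab, step a ha b hab⟩)
  exact (this (Set.mem_univ x)).1

/-- uniform bound on peripheral cycles -/
theorem PSet.bound [G.LocallyFinite] (hG : Good G) (A : Angle G)
    (htrans : ∀ u v : V, ∃ α : G ≃g G, α u = v) (o : V) :
    ∃ L : ℕ, ∀ X, PSet G X → X.ncard ≤ L := by
  classical
  have hfin : {X | PSet G X ∧ o ∈ X}.Finite := by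
    have hsub : {X | PSet G X ∧ o ∈ X} ⊆
        ⋃ w ∈ G.neighborFinset o, {X | PSet G X ∧ o ∈ X ∧ w ∈ X} := by
      rintro X ⟨hX, ho⟩
      have h2 := hX.nbr_ncard ho
      obtain ⟨w, hw, how⟩ := Set.nonempty_of_ncard_ne_zero (by rw [h2]; norm_num)
      simp only [Set.mem_iUnion]
      exact ⟨w, by simpa using how, hX, ho, hw⟩
    refine Set.Finite.subset ?_ hsub
    apply Set.Finite.biUnion (Finset.finite_toSet _)
    intro w hw
    by_contra hinf
    obtain ⟨t, ht, ht3⟩ := Set.Infinite.exists_subset_card_eq hinf 3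
    obtain ⟨X, Y, Z, h1, h2, h3, rfl⟩ := Finset.card_eq_three.mp ht3
    have hX := ht (show X ∈ _ by simp)
    have hY := ht (show Y ∈ _ by simp)
    have hZ := ht (show Z ∈ _ by simp)
    have hw' : G.Adj o w := by simpa using hw
    exact PSet.edge_three hG A hX.1 hY.1 hZ.1 h1 h2 h3 hw' hX.2.1 hX.2.2 hY.2.1 hY.2.2 hZ.2.1 hZ.2.2
  obtain ⟨L, hL⟩ := (hfin.image Set.ncard).bddAbove
  refine ⟨L, fun X hX => ?_⟩
  obtain ⟨x, hx, -⟩ := hX.third o o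
  obtain ⟨α, hα⟩ := htrans x o
  have := hL ⟨α '' X, ⟨hX.image α, x, hx, hα⟩, rfl⟩
  rwa [Set.ncard_image_of_injective _ α.injective] at this

end PG

namespace PG

variable {V : Type*} {G : SimpleGraph V} {W : Type*} {H : SimpleGraph W}

/-- balls -/
def Bl (G : SimpleGraph V) (v : V) (n : ℕ) : Set V := {u | ∃ p : G.Walk v u, p.length ≤ n}

theorem Bl_mono {v : V} {m n : ℕ} (h : m ≤ n) : Bl G v m ⊆ Bl G v n := by
  rintro u ⟨p, hp⟩; exact ⟨p, hp.trans h⟩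

theorem Bl_self {v : V} {n : ℕ} : v ∈ Bl G v n := ⟨.nil, by simp⟩

theorem Bl_trans {u v w : V} {m n k : ℕ} (h1 : v ∈ Bl G u m) (h2 : w ∈ Bl G v n) (h : m + n ≤ k) :
    w ∈ Bl G u k := by
  obtain ⟨p, hp⟩ := h1
  obtain ⟨q, hq⟩ := h2
  exact ⟨p.append q, by rw [Walk.length_append]; omega⟩

theorem Bl_symm {u v : V} {n : ℕ} (h : v ∈ Bl G u n) : u ∈ Bl G v n := by
  obtain ⟨p, hp⟩ := h
  exact ⟨p.reverse, by simpa using hp⟩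

theorem Bl_adj {u v : V} (h : G.Adj u v) : v ∈ Bl G u 1 := ⟨.cons h .nil, by simp⟩

theorem Bl_zero {u v : V} (h : v ∈ Bl G u 0) : v = u := by
  obtain ⟨p, hp⟩ := h
  exact (Walk.eq_of_length_eq_zero (by omega : p.length = 0)).symm

theorem Bl_succ {u v : V} {n : ℕ} (h : v ∈ Bl G u (n + 1)) :
    v ∈ Bl G u n ∨ ∃ y ∈ Bl G u n, G.Adj y v := by
  obtain ⟨p, hp⟩ := h
  obtain ⟨q, rfl⟩ : ∃ q : G.Walk v u, p = q.reverse := ⟨p.reverse, by simp⟩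
  cases q with
  | nil => exact Or.inl Bl_self
  | cons h q =>
    rename_i y
    right
    exact ⟨y, ⟨q.reverse, by simp at hp ⊢; omega⟩, h.symm⟩

theorem Bl_one {u v : V} (h : v ∈ Bl G u 1) : v = u ∨ G.Adj u v := by
  rcases Bl_succ (n := 0) h with h | ⟨y, hy, h⟩
  · exact Or.inl (Bl_zero h)
  · rw [Bl_zero hy] at h; exact Or.inr h

theorem Bl_aut (α : G ≃g G) {v u : V} {n : ℕ} : α u ∈ Bl G (α v) n ↔ u ∈ Bl G v n := by
  constructor
  · rintro ⟨p, hp⟩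
    exact ⟨(p.map α.symm.toHom).copy (by simp) (by simp), by simpa using hp⟩
  · rintro ⟨p, hp⟩
    exact ⟨p.map α.toHom, by simpa using hp⟩

theorem Bl_aut_image (α : G ≃g G) {v : V} {n : ℕ} : α '' Bl G v n = Bl G (α v) n := by
  ext z
  constructor
  · rintro ⟨u, hu, rfl⟩; exact (Bl_aut α).mpr hu
  · intro hz
    refine ⟨α.symm z, ?_, by simp⟩
    rw [← Bl_aut α]; simpa using hz

theorem Bl_finite [G.LocallyFinite] (v : V) (n : ℕ) : (Bl G v n).Finite := by
  classical
  induction n with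
  | zero => exact (Set.finite_singleton v).subset (fun u hu => Bl_zero hu)
  | succ n ih =>
    refine (ih.union (ih.biUnion (t := fun y => (G.neighborFinset y : Set V))
      (fun y _ => Finset.finite_toSet _))).subset ?_
    intro u hu
    rcases Bl_succ hu with h | ⟨y, hy, h⟩
    · exact Or.inl h
    · right
      simp only [Set.mem_iUnion]
      exact ⟨y, hy, by simpa using h⟩

/-- local isomorphisms on balls -/
structure LI (G : SimpleGraph V) (H : SimpleGraph W) (n : ℕ) (v : V) (f : V → W) : Prop where
  inj : Set.InjOn f (Bl G v n)
  adj : ∀ a ∈ Bl G v n, ∀ b ∈ Bl G v n, G.Adj a b ↔ H.Adj (f a) (f b)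
  img : f '' Bl G v n = Bl H (f v) n

theorem LI.shrink {n j k : ℕ} {v u : V} {f : V → W} (h : LI G H n v f) (hu : u ∈ Bl G v j)
    (hjk : j + k ≤ n) : LI G H k u f := by
  have hsub : ∀ u j k, u ∈ Bl G v j → j + k ≤ n → Bl G u k ⊆ Bl G v n := fun u j k hu hjk z hz =>
    Bl_trans hu hz hjk
  have fwd : ∀ k u j, u ∈ Bl G v j → j + k ≤ n → ∀ z ∈ Bl G u k, f z ∈ Bl H (f u) k := by
    intro k
    induction k with
    | zero => intro u j _ _ z hz; rw [Bl_zero hz]; exact Bl_self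
    | succ k ih =>
      intro u j hu hjk z hz
      rcases Bl_succ hz with h1 | ⟨y, hy, h1⟩
      · exact Bl_mono (Nat.le_succ k) (ih u j hu (by omega) z h1)
      · refine Bl_trans (ih u j hu (by omega) y hy) (Bl_adj ?_) le_rfl
        refine (h.adj y ?_ z ?_).mp h1
        · exact Bl_trans hu hy (by omega)
        · exact Bl_trans hu hz hjk
  refine ⟨h.inj.mono (hsub u j k hu hjk), fun a ha b hb => h.adj a (hsub u j k hu hjk ha) b
    (hsub u j k hu hjk hb), ?_⟩
  apply Set.Subset.antisymm
  · rintro _ ⟨z, hz, rfl⟩; exact fwd k u j hu hjk z hz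
  · have bwd : ∀ k, j + k ≤ n → ∀ z' ∈ Bl H (f u) k, ∃ z ∈ Bl G u k, f z = z' := by
      intro k
      induction k with
      | zero => intro _ z hz; rw [Bl_zero hz]; exact ⟨u, Bl_self, rfl⟩
      | succ k ih =>
        intro hjk z' hz'
        rcases Bl_succ hz' with h1 | ⟨y', hy', h1⟩
        · obtain ⟨z, hz, rfl⟩ := ih (by omega) z' h1
          exact ⟨z, Bl_mono (Nat.le_succ k) hz, rfl⟩
        · obtain ⟨y, hy, rfl⟩ := ih (by omega) y' hy'
          have h2 : z' ∈ Bl H (f v) n := Bl_trans (fwd j v 0 Bl_self (by omega) u hu) hz' hjk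
          rw [← h.img] at h2
          obtain ⟨z, hz, rfl⟩ := h2
          have := (h.adj y (Bl_trans hu hy (by omega)) z hz).mpr h1
          exact ⟨z, Bl_trans hy (Bl_adj this) le_rfl, rfl⟩
    intro z' hz'
    exact bwd k hjk z' hz'

theorem LI.le {n k : ℕ} {v : V} {f : V → W} (h : LI G H n v f) (hk : k ≤ n) : LI G H k v f :=
  h.shrink (Bl_self (n := 0)) (by omega)

theorem LI.comp {n : ℕ} {v : V} {f : V → W} (α : G ≃g G) (h : LI G H n (α v) f) :
    LI G H n v (f ∘ α) := by
  refine ⟨?_, ?_, ?_⟩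
  · intro a ha b hb hab
    exact α.injective (h.inj ((Bl_aut α).mpr ha) ((Bl_aut α).mpr hb) hab)
  · intro a ha b hb
    rw [← α.map_adj_iff]
    exact h.adj _ ((Bl_aut α).mpr ha) _ ((Bl_aut α).mpr hb)
  · rw [Set.image_comp, Bl_aut_image, h.img]; rfl

theorem LI.post {n : ℕ} {v : V} {f : V → V} (α : G ≃g G) (h : LI G G n v f) :
    LI G G n v (α ∘ f) := by
  refine ⟨?_, ?_, ?_⟩
  · intro a ha b hb hab
    exact h.inj ha hb (α.injective hab)
  · intro a ha b hb
    rw [h.adj a ha b hb]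
    exact α.map_adj_iff.symm
  · rw [Set.image_comp, h.img, Bl_aut_image]; rfl

theorem LI.lift {n : ℕ} {v v' : V} {f g : V → W} (hf : LI G H n v f) (hg : LI G H n v' g)
    (hvv : f v = g v') : ∃ h : V → V, LI G G n v h ∧ h v = v' ∧ ∀ u ∈ Bl G v n,
      h u ∈ Bl G v' n ∧ g (h u) = f u := by
  classical
  have hex : ∀ u, ∃ w, u ∈ Bl G v n → w ∈ Bl G v' n ∧ g w = f u := by
    intro u
    by_cases hu : u ∈ Bl G v n
    · have : f u ∈ f '' Bl G v n := ⟨u, hu, rfl⟩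
      rw [hf.img, hvv, ← hg.img] at this
      obtain ⟨w, hw, he⟩ := this
      exact ⟨w, fun _ => ⟨hw, he⟩⟩
    · exact ⟨v, fun h => absurd h hu⟩
  choose h hh using hex
  have hv : h v = v' := hg.inj (hh v Bl_self).1 Bl_self ((hh v Bl_self).2.trans hvv)
  refine ⟨h, ⟨?_, ?_, ?_⟩, hv, fun u hu => hh u hu⟩
  · intro a ha b hb hab
    apply hf.inj ha hb
    rw [← (hh a ha).2, ← (hh b hb).2, hab]
  · intro a ha b hb
    rw [hf.adj a ha b hb, hg.adj _ (hh a ha).1 _ (hh b hb).1, (hh a ha).2, (hh b hb).2]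
  · rw [hv]
    apply Set.Subset.antisymm
    · rintro _ ⟨u, hu, rfl⟩; exact (hh u hu).1
    · intro w hw
      have : g w ∈ g '' Bl G v' n := ⟨w, hw, rfl⟩
      rw [hg.img, ← hvv, ← hf.img] at this
      obtain ⟨u, hu, he⟩ := this
      exact ⟨u, hu, hg.inj (hh u hu).1 hw ((hh u hu).2.trans he)⟩

/-- compactness -/
theorem compactness [G.LocallyFinite] (hG : Conn G Set.univ)
    (htrans : ∀ u v : V, ∃ α : G ≃g G, α u = v) (o : V) :
    ∃ ρ : ℕ, 2 ≤ ρ ∧ ∀ (v : V) (h : V → V), LI G G ρ v h → ∃ α : G ≃g G, ∀ u ∈ Bl G v 2, α u = h u := by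
  classical
  by_contra hcon
  push Not at hcon
  have hbad : ∀ n : ℕ, ∃ h : V → V, LI G G n o h ∧ h o = o ∧
      ∀ α : G ≃g G, ∃ u ∈ Bl G o 2, α u ≠ h u := by
    intro n
    obtain ⟨v, h, hLI, hb⟩ := hcon (n + 2) (by omega)
    obtain ⟨γ, rfl⟩ := htrans o v
    obtain ⟨β, hβ⟩ := htrans (h (γ o)) o
    refine ⟨β ∘ (h ∘ γ), ((hLI.le (by omega)).comp γ).post β, hβ, ?_⟩
    intro α
    obtain ⟨u, hu, hne⟩ := hb ((γ.symm.trans α).trans β.symm)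
    refine ⟨γ.symm u, ?_, ?_⟩
    · rw [← Bl_aut γ]; simpa using hu
    · intro he
      apply hne
      have : β.symm (α (γ.symm u)) = β.symm (β (h (γ (γ.symm u)))) := congrArg β.symm he
      simpa using this
  choose h hLI ho hb using hbad
  let U : Ultrafilter ℕ := Filter.hyperfilter ℕ
  have hU : (U : Filter ℕ) ≤ Filter.atTop := by
    rw [← Nat.cofinite_eq_atTop]; exact Filter.hyperfilter_le_cofinite
  have hge : ∀ m, ∀ᶠ n in (U : Filter ℕ), m ≤ n := fun m => (Filter.eventually_ge_atTop m).filter_mono hU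
  have hd : ∀ u, ∃ d, u ∈ Bl G o d := by
    intro u
    obtain ⟨p, -⟩ := hG o (Set.mem_univ _) u (Set.mem_univ _)
    exact ⟨p.length, p, le_rfl⟩
  have hlim : ∀ u, ∃ w, ∀ᶠ n in (U : Filter ℕ), h n u = w := by
    intro u
    obtain ⟨d, hd⟩ := hd u
    have : ∀ᶠ n in (U : Filter ℕ), ∃ w ∈ Bl G o d, h n u = w := by
      filter_upwards [hge d] with n hn
      refine ⟨h n u, ?_, rfl⟩
      have := ((hLI n).le hn).img
      rw [ho n] at this
      rw [← this]; exact ⟨u, hd, rfl⟩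
    obtain ⟨w, -, hw⟩ := (Ultrafilter.eventually_exists_mem_iff (Bl_finite o d)).mp this
    exact ⟨w, hw⟩
  choose l hl using hlim
  have linj : Function.Injective l := by
    intro a b hab
    obtain ⟨da, hda⟩ := hd a
    obtain ⟨db, hdb⟩ := hd b
    obtain ⟨n, h1, h2, h3⟩ := ((hl a).and ((hl b).and (hge (max da db)))).exists
    apply (hLI n).inj (Bl_mono (by omega) hda) (Bl_mono (by omega) hdb)
    rw [h1, h2, hab]
  have lsurj : Function.Surjective l := by
    intro w
    obtain ⟨d, hd⟩ := hd w
    have : ∀ᶠ n in (U : Filter ℕ), ∃ u ∈ Bl G o d, h n u = w := by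
      filter_upwards [hge d] with n hn
      have := ((hLI n).le hn).img
      rw [ho n] at this
      rw [← this] at hd
      exact hd
    obtain ⟨u, -, hu⟩ := (Ultrafilter.eventually_exists_mem_iff (Bl_finite o d)).mp this
    obtain ⟨n, h1, h2⟩ := (hu.and (hl u)).exists
    exact ⟨u, h2.symm.trans h1⟩
  have ladj : ∀ a b, G.Adj (l a) (l b) ↔ G.Adj a b := by
    intro a b
    obtain ⟨da, hda⟩ := hd a
    obtain ⟨db, hdb⟩ := hd b
    obtain ⟨n, h1, h2, h3⟩ := ((hl a).and ((hl b).and (hge (max da db)))).exists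
    rw [(hLI n).adj a (Bl_mono (by omega) hda) b (Bl_mono (by omega) hdb), h1, h2]
  let α : G ≃g G := ⟨Equiv.ofBijective l ⟨linj, lsurj⟩, fun {a b} => ladj a b⟩
  have hall : ∀ᶠ n in (U : Filter ℕ), ∀ u ∈ Bl G o 2, h n u = l u := by
    rw [Filter.eventually_all_finite (Bl_finite o 2)]
    intro u _
    exact hl u
  obtain ⟨n, hn⟩ := hall.exists
  obtain ⟨u, hu, hne⟩ := hb n α
  exact hne (hn u hu).symm

end PG

namespace PG

variable {V : Type*} {G : SimpleGraph V}

/-- monodromy principle -/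
theorem monodromy [G.LocallyFinite] (hG : Good G) {S : Type*} (R : V → V → S → S → Prop)
    (hsymm : ∀ u v s t, R u v s t → R v u t s)
    (htot : ∀ u v, G.Adj u v → ∀ s, ∃ t, R u v s t)
    (huniq : ∀ u v, G.Adj u v → ∀ s t t', R u v s t → R u v s t' → t = t')
    (hcyc : ∀ (h : V → V → Equiv.Perm S), (∀ u v, G.Adj u v → ∀ t, R u v (h u v t) t) →
      ∀ (v : V) (c : G.Walk v v), c.IsCycle → PSet G {x | x ∈ c.support} → ∀ t, hol h c t = t)
    (o : V) (s0 : S) :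
    ∃ F : V → S, F o = s0 ∧ ∀ u v, G.Adj u v → R u v (F u) (F v) := by
  classical
  have hex : ∀ u v, ∃ e : Equiv.Perm S, G.Adj u v → ∀ t, R u v (e t) t := by
    intro u v
    by_cases huv : G.Adj u v
    · choose f hf using htot u v huv
      choose g hg using htot v u huv.symm
      refine ⟨⟨g, f, ?_, ?_⟩, fun _ t => hsymm _ _ _ _ (hg t)⟩
      · intro t
        exact huniq u v huv (g t) _ _ (hf _) (hsymm _ _ _ _ (hg t))
      · intro s
        exact huniq v u huv.symm (f s) _ _ (hg _) (hsymm _ _ _ _ (hf s))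
    · exact ⟨1, fun h => absurd h huv⟩
  choose h hh using hex
  have hinv : ∀ u v, G.Adj u v → h v u = (h u v)⁻¹ := by
    intro u v huv
    rw [eq_inv_iff_mul_eq_one]
    ext t
    exact huniq u v huv _ _ _ (hsymm _ _ _ _ (hh v u huv.symm _)) (hh u v huv t)
  have htriv : ∀ (v : V) (p : G.Walk v v), hol h p = 1 := by
    intro v p
    apply hol_trivial h hG hinv
    intro v c hc hch hcc
    ext t
    exact hcyc h hh v c hc ⟨v, c, hc, rfl, hch, hcc⟩ t
  have hindep : ∀ {u v : V} (p q : G.Walk u v), hol h p = hol h q := by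
    intro u v p q
    have := htriv u (p.append q.reverse)
    rw [hol_append, hol_reverse h hinv, mul_inv_eq_one] at this
    exact this
  have hw : ∀ v, ∃ _ : G.Walk v o, True := by
    intro v
    obtain ⟨p, -⟩ := hG.conn v (Set.mem_univ _) o (Set.mem_univ _)
    exact ⟨p, trivial⟩
  choose p _ using hw
  refine ⟨fun v => hol h (p v) s0, ?_, ?_⟩
  · show hol h (p o) s0 = s0
    rw [htriv]; rfl
  · intro u v huv
    show R u v (hol h (p u) s0) (hol h (p v) s0)
    rw [hindep (p u) (.cons huv (p v)), hol_cons]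
    exact hh u v huv _

variable {W : Type*} {H : SimpleGraph W}

/-- standing properties used in the construction of the cover -/
structure Ctx (G : SimpleGraph V) (ρ : ℕ) : Prop where
  two : 2 ≤ ρ
  ext : ∀ (v : V) (h : V → V), LI G G ρ v h → ∃ α : G ≃g G, ∀ u ∈ Bl G v 2, α u = h u
  rig : ∀ (α : G ≃g G) (v : V), α v = v → (∀ w, G.Adj v w → α w = w) → ∀ x, α x = x

theorem Ctx.RL {ρ : ℕ} (C : Ctx G ρ) {v : V} {f g : V → W} (hf : LI G H ρ v f)
    (hg : LI G H ρ v g) (h : Set.EqOn f g (Bl G v 1)) : Set.EqOn f g (Bl G v 2) := by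
  have h2 := C.two
  obtain ⟨k, hk, hkv, hkg⟩ := hf.lift hg (h Bl_self)
  obtain ⟨α, hα⟩ := C.ext v k hk
  have hk1 : ∀ u ∈ Bl G v 1, k u = u := by
    intro u hu
    have hu' : u ∈ Bl G v ρ := Bl_mono (by omega) hu
    apply hg.inj (hkg u hu').1 hu'
    rw [(hkg u hu').2]; exact h hu
  have hid := C.rig α v (by rw [hα v Bl_self, hkv]) (fun w hw => by
    rw [hα w (Bl_mono (by omega) (Bl_adj hw)), hk1 w (Bl_adj hw)])
  intro u hu
  have := (hkg u (Bl_mono h2 hu)).2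
  rw [← hα u hu, hid] at this
  exact this.symm

theorem Ctx.EL {ρ r : ℕ} (C : Ctx G ρ) (hr : ρ ≤ r)
    (hloc : ∀ (v : V) (x : W), ∃ f, LI G H r v f ∧ f v = x)
    {v : V} {f : V → W} (hf : LI G H ρ v f) :
    ∃ f', LI G H r v f' ∧ Set.EqOn f' f (Bl G v 2) := by
  obtain ⟨g, hg, hgv⟩ := hloc v (f v)
  obtain ⟨k, hk, hkv, hkg⟩ := hf.lift (hg.le hr) hgv.symm
  obtain ⟨α, hα⟩ := C.ext v k hk
  have hαv : α v = v := by rw [hα v Bl_self, hkv]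
  refine ⟨g ∘ α, LI.comp α (by rwa [hαv]), ?_⟩
  intro u hu
  show g (α u) = f u
  rw [hα u hu]; exact (hkg u (Bl_mono C.two hu)).2

/-- developing maps -/
def Dev (G : SimpleGraph V) (H : SimpleGraph W) (ρ : ℕ) (c : V → W) : Prop :=
  ∀ v, ∃ f, LI G H ρ v f ∧ Set.EqOn c f (Bl G v 2)

theorem Dev.unique {ρ : ℕ} (C : Ctx G ρ) (hG : Conn G Set.univ) {c c' : V → W}
    (hc : Dev G H ρ c) (hc' : Dev G H ρ c') {v : V} (h : Set.EqOn c c' (Bl G v 1)) : c = c' := by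
  funext x
  have := hG.eq_of_closed (T := {v | Set.EqOn c c' (Bl G v 1)}) (Set.mem_univ v) h ?_
  · exact this (Set.mem_univ x) Bl_self
  · intro a b ha _ _ hab u hu
    obtain ⟨f, hf, hcf⟩ := hc a
    obtain ⟨f', hf', hcf'⟩ := hc' a
    have key := C.RL hf hf' (fun z hz => by
      rw [← hcf (Bl_mono (by omega) hz), ← hcf' (Bl_mono (by omega) hz)]; exact ha hz)
    have hu2 : u ∈ Bl G a 2 := Bl_trans (Bl_adj hab) hu le_rfl
    rw [hcf hu2, hcf' hu2, key hu2]

theorem Dev.cover {ρ : ℕ} (h2 : 2 ≤ ρ) {c : V → W} (hc : Dev G H ρ c) : IsCover G H c := by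
  constructor
  · intro u v huv
    obtain ⟨f, hf, hcf⟩ := hc u
    rw [hcf Bl_self, hcf (Bl_mono (by omega) (Bl_adj huv))]
    exact (hf.adj u Bl_self v (Bl_mono (by omega) (Bl_adj huv))).mp huv
  · intro v
    obtain ⟨f, hf, hcf⟩ := hc v
    have hn : ∀ w, G.Adj v w → w ∈ Bl G v 2 := fun w hw => Bl_mono (by omega) (Bl_adj hw)
    refine ⟨?_, ?_, ?_⟩
    · intro w hw
      rw [SimpleGraph.mem_neighborSet] at hw ⊢
      rw [hcf (hn w hw), hcf Bl_self]
      exact (hf.adj v Bl_self w (Bl_mono h2 (hn w hw))).mp hw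
    · intro a ha b hb hab
      rw [SimpleGraph.mem_neighborSet] at ha hb
      rw [hcf (hn a ha), hcf (hn b hb)] at hab
      exact hf.inj (Bl_mono h2 (hn a ha)) (Bl_mono h2 (hn b hb)) hab
    · intro y hy
      rw [SimpleGraph.mem_neighborSet, hcf Bl_self] at hy
      have : y ∈ Bl H (f v) ρ := Bl_mono (by omega) (Bl_adj hy)
      rw [← hf.img] at this
      obtain ⟨w, hw, rfl⟩ := this
      have hvw := (hf.adj v Bl_self w hw).mpr hy
      exact ⟨w, hvw, hcf (hn w hvw)⟩

theorem Dev.normal {ρ : ℕ} (C : Ctx G ρ) (hG : Conn G Set.univ) {c : V → W}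
    (hc : Dev G H ρ c) {v1 v2 : V} (h : c v1 = c v2) :
    ∃ α : G ≃g G, α v1 = v2 ∧ ∀ x, c (α x) = c x := by
  have h2 := C.two
  obtain ⟨f1, hf1, hcf1⟩ := hc v1
  obtain ⟨f2, hf2, hcf2⟩ := hc v2
  obtain ⟨k, hk, hkv, hkg⟩ := hf1.lift hf2 (by rw [← hcf1 Bl_self, ← hcf2 Bl_self, h])
  obtain ⟨α, hα⟩ := C.ext v1 k hk
  have hαv : α v1 = v2 := by rw [hα v1 Bl_self, hkv]
  refine ⟨α, hαv, ?_⟩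
  have hdev : Dev G H ρ (c ∘ α) := by
    intro v
    obtain ⟨f, hf, hcf⟩ := hc (α v)
    exact ⟨f ∘ α, hf.comp α, fun u hu => hcf ((Bl_aut α).mpr hu)⟩
  have := Dev.unique C hG hdev hc (v := v1) ?_
  · intro x; exact congrFun this x
  · intro u hu
    have hu2 : u ∈ Bl G v1 2 := Bl_mono (by omega) hu
    show c (α u) = c u
    have : α u ∈ Bl G v2 2 := by rw [← hαv]; exact (Bl_aut α).mpr hu2
    rw [hcf2 this, hcf1 hu2, hα u hu2]
    exact (hkg u (Bl_mono h2 hu2)).2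

theorem exists_dev [G.LocallyFinite] {ρ L : ℕ} (C : Ctx G ρ) (hG : Good G)
    (htrans : ∀ u v : V, ∃ α : G ≃g G, α u = v) (o : V)
    (hL : ∀ X, PSet G X → X.ncard ≤ L) (x0 : W)
    (hloc : ∀ (v : V) (x : W), ∃ f, LI G H (ρ + L + 1) v f ∧ f v = x) :
    ∃ c : V → W, Dev G H ρ c := by
  classical
  have h2 := C.two
  choose a ha using htrans o
  let S := {s : V → W // (∀ u, u ∉ Bl G o 1 → s u = x0) ∧
    ∃ f, LI G H (ρ + L + 1) o f ∧ Set.EqOn f s (Bl G o 1)}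
  let E : V → S → (V → W) → Prop := fun v s f => ∀ z ∈ Bl G o 1, f (a v z) = s.1 z
  have E_eq : ∀ v s f f', E v s f → E v s f' → Set.EqOn f f' (Bl G v 1) := by
    intro v s f f' h h' u hu
    rw [← ha v, ← Bl_aut_image] at hu
    obtain ⟨z, hz, rfl⟩ := hu
    rw [h z hz, h' z hz]
  have E_cong : ∀ v s f f', E v s f → Set.EqOn f f' (Bl G v 1) → E v s f' := by
    intro v s f f' h h' z hz
    rw [← h' ?_, h z hz]
    have := (Bl_aut (a v)).mpr hz
    rwa [ha] at this
  have E_inj : ∀ v s s' f, E v s f → E v s' f → s = s' := by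
    intro v s s' f h h'
    apply Subtype.ext
    funext u
    by_cases hu : u ∈ Bl G o 1
    · rw [← h u hu, h' u hu]
    · rw [s.2.1 u hu, s'.2.1 u hu]
  have E_rep : ∀ v s, ∃ f, LI G H (ρ + L + 1) v f ∧ E v s f := by
    intro v s
    obtain ⟨f, hf, hfs⟩ := s.2.2
    refine ⟨f ∘ (a v).symm, LI.comp _ ?_, ?_⟩
    · have : (a v).symm v = o := (a v).injective (by rw [ha v]; simp)
      rwa [this]
    · intro z hz
      simpa using hfs hz
  have E_cls : ∀ v f, LI G H (ρ + L + 1) v f → ∃ s, E v s f := by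
    intro v f hf
    refine ⟨⟨fun u => if u ∈ Bl G o 1 then f (a v u) else x0, ?_, f ∘ a v, ?_, ?_⟩, ?_⟩
    · intro u hu; simp [hu]
    · apply LI.comp; rwa [ha]
    · intro u hu; simp [hu]
    · intro z hz; simp [hz]
  let R : V → V → S → S → Prop := fun u v s t => ∃ f f', LI G H (ρ + L + 1) u f ∧ E u s f ∧
    LI G H (ρ + L + 1) v f' ∧ E v t f' ∧ Set.EqOn f f' (Bl G u 1) ∧ Set.EqOn f f' (Bl G v 1)
  have B12 : ∀ {u v : V}, G.Adj u v → Bl G v 1 ⊆ Bl G u 2 := fun huv z hz =>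
    Bl_trans (Bl_adj huv) hz le_rfl
  have hsymm : ∀ u v s t, R u v s t → R v u t s := by
    rintro u v s t ⟨f, f', h1, h2, h3, h4, h5, h6⟩
    exact ⟨f', f, h3, h4, h1, h2, h6.symm, h5.symm⟩
  have htot : ∀ u v, G.Adj u v → ∀ s, ∃ t, R u v s t := by
    intro u v huv s
    obtain ⟨f, hf, hfs⟩ := E_rep u s
    obtain ⟨f', hf', he⟩ := C.EL (r := ρ + L + 1) (by omega) hloc
      (hf.shrink (Bl_adj huv) (k := ρ) (by omega))
    obtain ⟨t, ht⟩ := E_cls v f' hf'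
    exact ⟨t, f, f', hf, hfs, hf', ht, (he.mono (B12 huv.symm)).symm,
      (he.mono (Bl_mono (by omega))).symm⟩
  have huniq : ∀ u v, G.Adj u v → ∀ s t t', R u v s t → R u v s t' → t = t' := by
    rintro u v huv s t t' ⟨f1, f1', h1, h2, h3, h4, h5, h6⟩ ⟨f2, f2', k1, k2, k3, k4, k5, k6⟩
    have e1 := C.RL (h1.le (by omega)) (k1.le (by omega)) (E_eq u s f1 f2 h2 k2)
    have e2 : Set.EqOn f1' f2' (Bl G v 1) := fun z hz => by
      rw [← h6 hz, ← k6 hz]; exact e1 (B12 huv hz)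
    exact E_inj v t t' f2' (E_cong v t _ _ h4 e2) k4
  have hcyc : ∀ (h : V → V → Equiv.Perm S), (∀ u v, G.Adj u v → ∀ t, R u v (h u v t) t) →
      ∀ (v : V) (c : G.Walk v v), c.IsCycle → PSet G {x | x ∈ c.support} → ∀ t, hol h c t = t := by
    intro h hh v c hc hP t
    obtain ⟨g, hg, hgt⟩ := E_rep v t
    have hlen : c.length ≤ L := by
      have h1 := hL _ hP
      have h3 : {x | x ∈ c.support} = (c.support.tail.toFinset : Set V) := by
        ext z
        simp only [Set.mem_ofPred_eq, List.coe_toFinset]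
        constructor
        · intro hz
          by_cases hzv : z = v
          · subst hzv; exact Walk.end_mem_tail_support hc.not_nil
          · exact mem_tail_of_ne hz hzv
        · exact List.mem_of_mem_tail
      rw [h3, Set.ncard_coe_finset, List.toFinset_card_of_nodup hc.support_nodup] at h1
      simpa using h1
    have hin : ∀ z ∈ c.support, z ∈ Bl G v L := fun z hz =>
      ⟨c.takeUntil z hz, (c.length_takeUntil_le hz).trans hlen⟩
    have key : ∀ {x y : V} (p : G.Walk x y), (∀ z ∈ p.support, z ∈ Bl G v L) → ∀ t, E y t g →
        E x (hol h p t) g := by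
      intro x y p
      induction p with
      | nil => intro _ t ht; exact ht
      | cons hadj p ih =>
        rename_i x y w
        intro hs t ht
        have hE := ih (fun z hz => hs z (by simp [hz])) t ht
        rw [hol_cons]
        show E x (h x y (hol h p t)) g
        obtain ⟨f, f', h1, h2, h3, h4, h5, h6⟩ := hh x y hadj (hol h p t)
        have hy : y ∈ Bl G v L := hs y (by simp)
        have e1 := C.RL (h3.le (by omega)) (hg.shrink hy (k := ρ) (by omega))
          (E_eq y _ _ _ h4 hE)
        exact E_cong x _ f g h2 (fun z hz => (h5 hz).trans (e1 (B12 hadj.symm hz)))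
    exact E_inj v _ _ g (key c hin t hgt) hgt
  obtain ⟨f0, hf0, -⟩ := hloc o x0
  obtain ⟨s0, -⟩ := E_cls o f0 hf0
  obtain ⟨F, -, hF⟩ := monodromy hG R hsymm htot huniq hcyc o s0
  choose φ hφ hφE using fun v => E_rep v (F v)
  have hagree : ∀ u v, G.Adj u v → Set.EqOn (φ u) (φ v) (Bl G u 1) := by
    intro u v huv
    obtain ⟨f, f', h1, h2, h3, h4, h5, h6⟩ := hF u v huv
    have e1 := C.RL (h3.le (by omega)) ((hφ v).le (by omega)) (E_eq v _ _ _ h4 (hφE v))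
    intro z hz
    rw [E_eq u _ _ _ (hφE u) h2 hz, h5 hz, e1 (B12 huv.symm hz)]
  refine ⟨fun v => φ v v, fun v => ⟨φ v, (hφ v).le (by omega), ?_⟩⟩
  have one : ∀ u v, v ∈ Bl G u 1 → φ v v = φ u v := by
    intro u v hv
    rcases Bl_one hv with rfl | h
    · rfl
    · exact hagree v u h.symm Bl_self
  intro w hw
  rcases Bl_succ (n := 1) hw with h | ⟨y, hy, h⟩
  · exact one v w h
  · show φ w w = φ v w
    rw [one y w (Bl_adj h)]
    rcases Bl_one hy with rfl | h'
    · rfl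
    · exact hagree y v h'.symm (Bl_adj h)

/-- from unrooted ball isomorphisms to rooted local isomorphisms -/
theorem exists_LI [G.LocallyFinite] (hG : Conn G Set.univ)
    (htrans : ∀ u v : V, ∃ α : G ≃g G, α u = v) (o : V) (r : ℕ)
    (hH : ∀ x : W, Nonempty ((H.induce {u | H.dist x u ≤ r}) ≃g
        (G.induce {u | G.dist o u ≤ r}))) (v : V) (x : W) :
    ∃ f, LI G H r v f ∧ f v = x := by
  classical
  have hGr : ∀ u, G.Reachable o u := by
    intro u
    obtain ⟨p, -⟩ := hG o (Set.mem_univ _) u (Set.mem_univ _)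
    exact ⟨p⟩
  have hGB : ∀ u, G.dist o u ≤ r ↔ u ∈ Bl G o r := by
    intro u
    constructor
    · intro h
      obtain ⟨p, hp⟩ := (hGr u).exists_walk_length_eq_dist
      exact ⟨p, hp ▸ h⟩
    · rintro ⟨p, hp⟩; exact (SimpleGraph.dist_le p).trans hp
  have hwalk : ∀ {K : Type _} (Q : SimpleGraph K) (c : K) (u w : K) (p : Q.Walk u w) (n : ℕ),
      u ∈ Bl Q c n → n + p.length ≤ r → ∀ z ∈ p.support, Q.dist c z ≤ r := by
    intro K Q c u w p n hu hn z hz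
    have : z ∈ Bl Q c r := Bl_trans hu ⟨p.takeUntil z hz, p.length_takeUntil_le hz⟩ hn
    obtain ⟨q, hq⟩ := this
    exact (SimpleGraph.dist_le q).trans hq
  have hwalkH : ∀ (c : W) (u w : W) (p : H.Walk u w) (n : ℕ),
      u ∈ Bl H c n → n + p.length ≤ r → ∀ z ∈ p.support, H.dist c z ≤ r := by
    intro c u w p n hu hn z hz
    have : z ∈ Bl H c r := Bl_trans hu ⟨p.takeUntil z hz, p.length_takeUntil_le hz⟩ hn
    obtain ⟨q, hq⟩ := this
    exact (SimpleGraph.dist_le q).trans hq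
  obtain ⟨φ⟩ := hH x
  have hxx : H.dist x x ≤ r := by simp
  have hoo : G.dist o o ≤ r := by simp
  have hreach : ∀ u, H.dist x u ≤ r → H.Reachable x u := by
    intro u hu
    have hall : ∀ z : {u | G.dist o u ≤ r}, (G.induce {u | G.dist o u ≤ r}).Reachable ⟨o, hoo⟩ z := by
      rintro ⟨z, hz⟩
      obtain ⟨p, hp⟩ := (hGB z).mp hz
      exact ⟨p.induce _ (hwalk G o o z p 0 Bl_self (by omega))⟩
    have h1 : (G.induce {u | G.dist o u ≤ r}).Reachable (φ ⟨x, hxx⟩) (φ ⟨u, hu⟩) :=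
      (hall _).symm.trans (hall _)
    have h2 := h1.map φ.symm.toHom
    have h3 := h2.map (SimpleGraph.Embedding.induce {u | H.dist x u ≤ r}).toHom
    simpa using h3
  have hHB : ∀ u, H.dist x u ≤ r ↔ u ∈ Bl H x r := by
    intro u
    constructor
    · intro h
      obtain ⟨p, hp⟩ := (hreach u h).exists_walk_length_eq_dist
      exact ⟨p, hp ▸ h⟩
    · rintro ⟨p, hp⟩; exact (SimpleGraph.dist_le p).trans hp
  have hsub : Bl G o r ⊆ Bl G (φ ⟨x, hxx⟩).1 r := by
    intro z hz
    have hz' := (hGB z).mpr hz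
    have hu := (φ.symm ⟨z, hz'⟩).2
    obtain ⟨p, hp⟩ := (hHB _).mp hu
    let p1 := p.induce {u | H.dist x u ≤ r} (hwalkH x x _ p 0 Bl_self (by omega))
    let p2 := (p1.map φ.toHom).map (SimpleGraph.Embedding.induce {u | G.dist o u ≤ r}).toHom
    have hl : p2.length = p.length := by
      simp only [p2, p1, Walk.length_map]
      have := congrArg Walk.length (Walk.map_induce p (hwalkH x x _ p 0 Bl_self (by omega)))
      rwa [Walk.length_map] at this
    have hmem : ∀ {s t y : V} (q : G.Walk s t), s = y → t = z → q.length ≤ r → z ∈ Bl G y r := by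
      rintro s t y q rfl rfl hq; exact ⟨q, hq⟩
    exact hmem p2 rfl (by simp) (by rw [hl]; exact hp)
  have hBeq : Bl G o r = Bl G (φ ⟨x, hxx⟩).1 r := by
    apply Set.eq_of_subset_of_ncard_le hsub _ (Bl_finite _ _)
    obtain ⟨α, hα⟩ := htrans o (φ ⟨x, hxx⟩).1
    rw [← hα, ← Bl_aut_image, Set.ncard_image_of_injective _ α.injective]
  let f : V → W := fun z => if hz : G.dist o z ≤ r then (φ.symm ⟨z, hz⟩).1 else x
  have hf : ∀ z (hz : G.dist o z ≤ r), f z = (φ.symm ⟨z, hz⟩).1 := fun z hz => by simp [f, hz]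
  have hfy : f (φ ⟨x, hxx⟩).1 = x := by
    rw [hf _ (φ ⟨x, hxx⟩).2]; simp
  have hLI : LI G H r (φ ⟨x, hxx⟩).1 f := by
    refine ⟨?_, ?_, ?_⟩
    · intro a ha b hb hab
      rw [← hBeq, ← hGB] at ha hb
      rw [hf a ha, hf b hb] at hab
      have := φ.symm.injective (Subtype.ext hab)
      exact congrArg Subtype.val this
    · intro a ha b hb
      rw [← hBeq, ← hGB] at ha hb
      rw [hf a ha, hf b hb]
      have := φ.symm.map_adj_iff (v := ⟨a, ha⟩) (w := ⟨b, hb⟩)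
      simpa using this.symm
    · rw [hfy, ← hBeq]
      ext z
      rw [← hHB]
      constructor
      · rintro ⟨u, hu, rfl⟩
        rw [← hGB] at hu
        rw [hf u hu]; exact (φ.symm ⟨u, hu⟩).2
      · intro hz
        refine ⟨(φ ⟨z, hz⟩).1, (hGB _).mp (φ ⟨z, hz⟩).2, ?_⟩
        rw [hf _ (φ ⟨z, hz⟩).2]; simp
  obtain ⟨α, hα⟩ := htrans v (φ ⟨x, hxx⟩).1
  refine ⟨f ∘ α, LI.comp α (by rwa [hα]), ?_⟩
  show f (α v) = x
  rw [hα, hfy]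

end PG

/-- Main theorem: if `G` is a vertex-transitive, planar, 1-ended, locally finite graph,
then there is `r : ℕ` such that `G` covers (normally) every nonempty graph `H` all of whose
balls of radius `r` are isomorphic to the ball of radius `r` in `G`. -/
theorem vertexTransitive_planar_oneEnded_covers_locally_G_graphs
    {V : Type u} (G : SimpleGraph V) [G.LocallyFinite]
    (hpl : Nonempty (PlanarEmbedding G))
    (htrans : ∀ u v : V, ∃ α : G ≃g G, α u = v)
    (hone : OneEnded G) (o : V) :
    ∃ r : ℕ, ∀ (W : Type w) (H : SimpleGraph W), Nonempty W →
      (∀ x : W, Nonempty ((H.induce {u | H.dist x u ≤ r}) ≃g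
        (G.induce {u | G.dist o u ≤ r}))) →
      ∃ c : V → W, IsCover G H c ∧
        ∀ v₁ v₂ : V, c v₁ = c v₂ →
          ∃ α : G ≃g G, α v₁ = v₂ ∧ ∀ x : V, c (α x) = c x := by
  classical
  obtain ⟨emb⟩ := hpl
  obtain ⟨A⟩ := PG.exists_angle emb
  have hG := PG.good_of htrans hone
  obtain ⟨L, hL⟩ := PG.PSet.bound hG A htrans o
  obtain ⟨ρ, h2, hext⟩ := PG.compactness hG.conn htrans o
  have C : PG.Ctx G ρ := ⟨h2, hext, fun α v hv hN => PG.rigid hG A α hv hN⟩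
  refine ⟨ρ + L + 1, ?_⟩
  rintro W H ⟨x0⟩ hH
  obtain ⟨c, hc⟩ := PG.exists_dev C hG htrans o hL x0
    (PG.exists_LI hG.conn htrans o (ρ + L + 1) hH)
  exact ⟨c, hc.cover h2, fun v₁ v₂ h => hc.normal C hG.conn h⟩
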